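/- There is a constant C depending only on m and K such that for every ε' ∈ (0,1), with probability at least 1 − ε' (over the Gaussian noise ε), the inequality (ε/σ, f)_n ≤ C [ ( r_n + √(log(ep)/n) + √(log(1/ε')/n) ) ‖f‖_n + ( r_n² + r_n √(log(ep)/n) + r_n √(log(1/ε')/n) ) Ω̃_gr(f) ] holds simultaneously for all f ∈ F_M. -/

import Mathlib

open MeasureTheory ProbabilityTheory

noncomputable section

namespace Census

/-- Additive representation indexed by `{(j,k) : j ≤ k}`: `main j` is the (univariate)
diagonal component for `(j,j)`, `inter j k` the bivariate component for `j < k`;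
all components are `m`-times continuously differentiable. -/
structure AddRepM (p m : ℕ) where
  main : Fin p → ℝ → ℝ
  inter : Fin p → Fin p → ℝ → ℝ → ℝ
  smooth_main : ∀ j, ContDiff ℝ (m : ℕ∞) (main j)
  smooth_inter : ∀ j k, ContDiff ℝ (m : ℕ∞) (fun q : ℝ × ℝ => inter j k q.1 q.2)

namespace AddRepM
variable {p m : ℕ}

def toFun (R : AddRepM p m) (x : Fin p → ℝ) : ℝ :=
  (∑ j, R.main j (x j)) + ∑ j, ∑ k, if j < k then R.inter j k (x j) (x k) else 0

def Gcount (R : AddRepM p m) : ℕ :=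
  Nat.card {j : Fin p // R.main j ≠ 0} +
    Nat.card {q : Fin p × Fin p // q.1 < q.2 ∧ R.inter q.1 q.2 ≠ 0}

end AddRepM

/-- Mixed partial derivative `∂^{a+b} g / ∂u^a ∂v^b`. -/
def pd (a b : ℕ) (g : ℝ → ℝ → ℝ) (u v : ℝ) : ℝ :=
  iteratedDeriv a (fun t => iteratedDeriv b (g t) v) u

/-- `m`-th order smoothness penalty of a univariate component. -/
def Omega1M (m : ℕ) (h : ℝ → ℝ) : ℝ := ∫ u in (0:ℝ)..1, (iteratedDeriv m h u) ^ 2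

/-- `m`-th order smoothness penalty of a bivariate component:
`Σ_{a+b=m} ‖∂^m g/∂u^a ∂v^b‖²_{L²([0,1]²)}`. -/
def Omega2M (m : ℕ) (g : ℝ → ℝ → ℝ) : ℝ :=
  ∑ a ∈ Finset.range (m + 1),
    ∫ q in (Set.Icc (0:ℝ) 1) ×ˢ (Set.Icc (0:ℝ) 1), (pd a (m - a) g q.1 q.2) ^ 2

def OmegaGrM {p m : ℕ} (R : AddRepM p m) : ℝ :=
  (∑ j, Omega1M m (R.main j)) + ∑ j, ∑ k, if j < k then Omega2M m (R.inter j k) else 0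

def OmegaTildeGrM {p m : ℕ} (R : AddRepM p m) : ℝ :=
  (∑ j, Real.sqrt (Omega1M m (R.main j))) +
    ∑ j, ∑ k, if j < k then Real.sqrt (Omega2M m (R.inter j k)) else 0

def evalVecM {n p m : ℕ} (x : Fin n → Fin p → ℝ) (R : AddRepM p m) : Fin n → ℝ :=
  fun i => R.toFun (x i)

def normSqN {n : ℕ} (v : Fin n → ℝ) : ℝ := (1 / n) * ∑ i, v i ^ 2

def normN {n : ℕ} (v : Fin n → ℝ) : ℝ := Real.sqrt (normSqN v)

def innerN {n : ℕ} (u v : Fin n → ℝ) : ℝ := (1 / n) * ∑ i, u i * v i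

def objectiveM {n p m : ℕ} (x : Fin n → Fin p → ℝ) (y : Fin n → ℝ) (lam mu : ℝ)
    (R : AddRepM p m) : ℝ :=
  normSqN (fun i => y i - evalVecM x R i) + lam * OmegaGrM R + mu * (R.Gcount : ℝ)

def IsMinimizerM {n p m : ℕ} (K : ℕ) (x : Fin n → Fin p → ℝ) (y : Fin n → ℝ)
    (lam mu : ℝ) (Rhat : AddRepM p m) : Prop :=
  Rhat.Gcount ≤ K ∧ ∀ R : AddRepM p m, R.Gcount ≤ K →
    objectiveM x y lam mu Rhat ≤ objectiveM x y lam mu R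

/-- Critical rate `rₙ = n^{-m/(2m+2)}`. -/
def rnM (m n : ℕ) : ℝ := (n : ℝ) ^ (-(m : ℝ) / (2 * m + 2))

def logep (p : ℕ) : ℝ := Real.log (Real.exp 1 * p)

def gaussMeasure (n : ℕ) (σ : ℝ) : Measure (Fin n → ℝ) :=
  Measure.pi fun _ : Fin n => gaussianReal 0 ⟨σ ^ 2, sq_nonneg σ⟩

/-- Membership of a representation's support in the index set `J ⊆ 𝒥`. -/
def SuppIn {p m : ℕ} (R : AddRepM p m) (J : Finset (Fin p × Fin p)) : Prop :=
  (∀ j, R.main j ≠ 0 → (j, j) ∈ J) ∧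
    (∀ j k, R.inter j k ≠ (0 : ℝ → ℝ → ℝ) → j < k ∧ (j, k) ∈ J)

end Census

/-!
Sampled at the design points, a component of `f` lies within root mean square distance
`2 ^ (-m * l)`, up to constants and its seminorm `Ω̃`, of a subspace of dimension of order `4 ^ l`:
quarter the unit square adaptively and use on each cell a Taylor polynomial whose expansion point
does at least as well as the average over the cell.

On a subspace of dimension `d`, a standard Gaussian functional has norm at most `√(4 * (t + d))`
outside an event of probability `exp (-t)`. A union bound over the levels `l = L, L + 1, …` and over
the `p ^ (2 * M)` choices of components makes these bounds simultaneous. Chaining then sums, along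
each component, increments of size `4 ^ (-i)` (since `2 ≤ m`) against norms of order `2 ^ i`, a
convergent geometric series. The coarsest level `L` balances `4 ^ L / n` against `rₙ ^ 2` and
`2 ^ (-m * L)` against `rₙ`.
-/

namespace Census

section Gaussian

lemma lintegral_exp_sq_div_four_gaussianReal_le :
    ∫⁻ x, ENNReal.ofReal (Real.exp (x ^ 2 / 4)) ∂(gaussianReal 0 1) ≤
      ENNReal.ofReal (Real.exp 1) := by
  have density_mul (x : ℝ) : gaussianPDFReal 0 1 x * Real.exp (x ^ 2 / 4) =
      (√(2 * Real.pi))⁻¹ * Real.exp (-(1 / 4) * x ^ 2) := by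
    rw [gaussianPDFReal, mul_assoc, ← Real.exp_add]
    simp only [NNReal.coe_one, mul_one, sub_zero]
    ring_nf
  have sqrt_le : √(Real.pi / (1 / 4)) ≤ 2 * √(2 * Real.pi) := by
    rw [Real.sqrt_le_left (by positivity), mul_pow, Real.sq_sqrt (by positivity)]
    linarith [Real.pi_pos]
  rw [gaussianReal_of_var_ne_zero 0 one_ne_zero,
    lintegral_withDensity_eq_lintegral_mul _ (measurable_gaussianPDF _ _) (by fun_prop)]
  simp only [Pi.mul_apply, gaussianPDF, ← ENNReal.ofReal_mul (gaussianPDFReal_nonneg 0 1 _),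
    density_mul]
  rw [← ofReal_integral_eq_lintegral_ofReal
    ((integrable_exp_neg_mul_sq (by norm_num)).const_mul _) (.of_forall fun x => by positivity),
    integral_const_mul, integral_gaussian]
  apply ENNReal.ofReal_le_ofReal
  calc (√(2 * Real.pi))⁻¹ * √(Real.pi / (1 / 4))
      ≤ (√(2 * Real.pi))⁻¹ * (2 * √(2 * Real.pi)) := by gcongr
    _ = 2 := by field_simp
    _ ≤ Real.exp 1 := by linarith [Real.add_one_le_exp 1]

lemma lintegral_pi_prod_eval {ι : Type*} [Fintype ι] {α : ι → Type*}
    [∀ i, MeasurableSpace (α i)] (μ : ∀ i, Measure (α i)) [∀ i, IsProbabilityMeasure (μ i)]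
    {f : ∀ i, α i → ENNReal} (hf : ∀ i, Measurable (f i)) :
    ∫⁻ x, ∏ i, f i (x i) ∂(Measure.pi μ) = ∏ i, ∫⁻ y, f i y ∂(μ i) := by
  refine (lintegral_prod_eq_prod_lintegral_of_indepFun Finset.univ
    (fun i (x : ∀ i, α i) => f i (x i))
    (iIndepFun_pi fun i => (hf i).aemeasurable) (fun i => by fun_prop)).trans ?_
  exact Finset.prod_congr rfl fun i _ => (measurePreserving_eval μ i).lintegral_comp (hf i)

variable {E : Type*} [NormedAddCommGroup E] [InnerProductSpace ℝ E] [FiniteDimensional ℝ E]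
  [MeasurableSpace E] [BorelSpace E]

lemma lintegral_exp_norm_sq_div_four_stdGaussian_le :
    ∫⁻ x, ENNReal.ofReal (Real.exp (‖x‖ ^ 2 / 4)) ∂(stdGaussian E) ≤
      ENNReal.ofReal (Real.exp (Module.finrank ℝ E)) := by
  have norm_sq (x : Fin (Module.finrank ℝ E) → ℝ) :
      ‖∑ i, x i • stdOrthonormalBasis ℝ E i‖ ^ 2 = ∑ i, x i ^ 2 := by
    rw [← (stdOrthonormalBasis ℝ E).sum_sq_inner_right]
    simp only [(stdOrthonormalBasis ℝ E).orthonormal.inner_right_fintype]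
  rw [stdGaussian, lintegral_map (by fun_prop) (by fun_prop)]
  simp_rw [norm_sq, Finset.sum_div, Real.exp_sum,
    ENNReal.ofReal_prod_of_nonneg fun _ _ => (Real.exp_pos _).le]
  rw [lintegral_pi_prod_eval (fun _ => gaussianReal 0 1)
    (f := fun _ y => ENNReal.ofReal (Real.exp (y ^ 2 / 4))) (fun _ => by fun_prop)]
  calc ∏ i : Fin (Module.finrank ℝ E), ∫⁻ x, ENNReal.ofReal (Real.exp (x ^ 2 / 4))
        ∂(gaussianReal 0 1)
      ≤ ∏ _i : Fin (Module.finrank ℝ E), ENNReal.ofReal (Real.exp 1) :=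
        Finset.prod_le_prod' fun _ _ => lintegral_exp_sq_div_four_gaussianReal_le
    _ = ENNReal.ofReal (Real.exp (Module.finrank ℝ E)) := by
        rw [Finset.prod_const, Finset.card_univ, Fintype.card_fin,
          ← ENNReal.ofReal_pow (Real.exp_pos _).le, ← Real.exp_nat_mul, mul_one]

lemma stdGaussian_map_orthogonalProjectionOnto (W : Submodule ℝ E) :
    (stdGaussian E).map W.orthogonalProjectionOnto = stdGaussian W := by
  apply Measure.ext_of_charFun
  ext w
  rw [charFun_apply, integral_map (by fun_prop) (by fun_prop)]
  simp only [W.inner_orthogonalProjectionOnto_eq_of_mem_right]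
  rw [← charFun_apply, charFun_stdGaussian, charFun_stdGaussian, Submodule.coe_norm]

lemma stdGaussian_exists_lt_inner_le (W : Submodule ℝ E) {d : ℝ}
    (hd : (Module.finrank ℝ W : ℝ) ≤ d) (t : ℝ) :
    stdGaussian E {ξ | ∃ w ∈ W, √(4 * (t + d)) * ‖w‖ < inner ℝ ξ w} ≤
      ENNReal.ofReal (Real.exp (-t)) := by
  have subset_tail : {ξ : E | ∃ w ∈ W, √(4 * (t + d)) * ‖w‖ < inner ℝ ξ w} ⊆
      W.orthogonalProjectionOnto ⁻¹'
        {y | ENNReal.ofReal (Real.exp (t + d)) ≤ ENNReal.ofReal (Real.exp (‖y‖ ^ 2 / 4))} := by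
    rintro ξ ⟨w, hw, hlt⟩
    have le_norm : √(4 * (t + d)) ≤ ‖W.orthogonalProjectionOnto ξ‖ := by
      have cauchy_schwarz := real_inner_le_norm (W.orthogonalProjectionOnto ξ) ⟨w, hw⟩
      rw [W.inner_orthogonalProjectionOnto_eq_of_mem_right] at cauchy_schwarz
      exact le_of_mul_le_mul_right (hlt.le.trans cauchy_schwarz)
        (lt_of_le_of_ne (norm_nonneg w) fun h => by simp [norm_eq_zero.mp h.symm] at hlt)
    have := Real.sqrt_le_left (norm_nonneg (W.orthogonalProjectionOnto ξ)) |>.mp le_norm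
    exact ENNReal.ofReal_le_ofReal (Real.exp_le_exp.mpr (by linarith))
  calc stdGaussian E {ξ | ∃ w ∈ W, √(4 * (t + d)) * ‖w‖ < inner ℝ ξ w}
      ≤ stdGaussian E (W.orthogonalProjectionOnto ⁻¹'
          {y | ENNReal.ofReal (Real.exp (t + d)) ≤ ENNReal.ofReal (Real.exp (‖y‖ ^ 2 / 4))}) :=
        measure_mono subset_tail
    _ = stdGaussian W
          {y | ENNReal.ofReal (Real.exp (t + d)) ≤ ENNReal.ofReal (Real.exp (‖y‖ ^ 2 / 4))} := by
        rw [← stdGaussian_map_orthogonalProjectionOnto W, Measure.map_apply (by fun_prop)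
          (measurableSet_le measurable_const (by fun_prop))]
    _ ≤ (∫⁻ y, ENNReal.ofReal (Real.exp (‖y‖ ^ 2 / 4)) ∂(stdGaussian W)) /
          ENNReal.ofReal (Real.exp (t + d)) :=
        meas_ge_le_lintegral_div (by fun_prop) (by simp [Real.exp_pos]) ENNReal.ofReal_ne_top
    _ ≤ ENNReal.ofReal (Real.exp d) / ENNReal.ofReal (Real.exp (t + d)) := by
        gcongr
        exact lintegral_exp_norm_sq_div_four_stdGaussian_le.trans
          (ENNReal.ofReal_le_ofReal (Real.exp_le_exp.mpr hd))
    _ = ENNReal.ofReal (Real.exp (-t)) := by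
        rw [← ENNReal.ofReal_div_of_pos (Real.exp_pos _), ← Real.exp_sub]
        ring_nf

instance isProbabilityMeasure_gaussMeasure (n : ℕ) (σ : ℝ) :
    IsProbabilityMeasure (gaussMeasure n σ) :=
  inferInstanceAs (IsProbabilityMeasure (Measure.pi fun _ => gaussianReal 0 (.mk _ _)))

lemma gaussMeasure_map_div (n : ℕ) {σ : ℝ} (hσ : σ ≠ 0) :
    (gaussMeasure n σ).map (fun ε => WithLp.toLp 2 fun i => ε i / σ) =
      stdGaussian (EuclideanSpace ℝ (Fin n)) := by
  have coord : MeasurePreserving (fun x : ℝ => x / σ)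
      (gaussianReal 0 (NNReal.mk (σ ^ 2) (sq_nonneg σ))) (gaussianReal 0 1) := by
    refine ⟨by fun_prop, ?_⟩
    rw [gaussianReal_map_div_const, zero_div, div_self]
    simpa [← NNReal.coe_eq_zero] using hσ
  rw [← map_pi_eq_stdGaussian, ← (measurePreserving_pi _ _ fun _ : Fin n => coord).map_eq,
    Measure.map_map (by fun_prop) (by fun_prop)]
  rfl

end Gaussian

section DirectionalDerivatives

variable {E G : Type*} [NormedAddCommGroup E] [NormedSpace ℝ E] [NormedAddCommGroup G]
  [NormedSpace ℝ G] {F : E → G}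

/-- The derivative of `F` in the direction `v`, as an operator on functions, so that it can be
iterated. -/
def dirDeriv (v : E) (F : E → G) (z : E) : G := fderiv ℝ F z v

lemma contDiff_dirDeriv {k : ℕ} (hF : ContDiff ℝ (k + 1 : ℕ) F) (v : E) :
    ContDiff ℝ k (dirDeriv v F) :=
  (hF.fderiv_right (m := k) (by norm_cast)).clm_apply contDiff_const

lemma contDiff_iterate_dirDeriv (v : E) (j : ℕ) {k : ℕ} (hF : ContDiff ℝ (k + j : ℕ) F) :
    ContDiff ℝ k ((dirDeriv v)^[j] F) := by
  induction j generalizing F with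
  | zero => exact hF
  | succ j ih => exact ih (contDiff_dirDeriv hF v)

lemma dirDeriv_comm (hF : ContDiff ℝ 2 F) (v w : E) :
    dirDeriv v (dirDeriv w F) = dirDeriv w (dirDeriv v F) := by
  have hdF : Differentiable ℝ (fderiv ℝ F) :=
    (hF.fderiv_right (m := 1) (by norm_num)).differentiable (by norm_num)
  have second_deriv (v w z : E) : dirDeriv v (dirDeriv w F) z = fderiv ℝ (fderiv ℝ F) z v w := by
    change fderiv ℝ (fun z => fderiv ℝ F z w) z v = _
    simp [fderiv_clm_apply (hdF z) (differentiableAt_const w)]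
  ext z
  rw [second_deriv, second_deriv]
  exact hF.contDiffAt.isSymmSndFDerivAt (by simp) v w

lemma dirDeriv_iterate_comm (v w : E) (k : ℕ) (hF : ContDiff ℝ (k + 1 : ℕ) F) :
    dirDeriv v ((dirDeriv w)^[k] F) = (dirDeriv w)^[k] (dirDeriv v F) := by
  induction k generalizing F with
  | zero => rfl
  | succ k ih =>
    rw [Function.iterate_succ_apply, ih (contDiff_dirDeriv hF w),
      dirDeriv_comm (hF.of_le (by norm_cast; lia)), Function.iterate_succ_apply]

lemma iteratedDeriv_comp_line {k : ℕ} (hF : ContDiff ℝ k F) (y w : E) :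
    iteratedDeriv k (fun t : ℝ => F (y + t • w)) =
      fun t => (dirDeriv w)^[k] F (y + t • w) := by
  induction k generalizing F with
  | zero => simp
  | succ k ih =>
    have deriv_line : deriv (fun t : ℝ => F (y + t • w)) = fun t => dirDeriv w F (y + t • w) := by
      ext t
      have hline : HasDerivAt (fun t : ℝ => y + t • w) w t := by
        simpa using ((hasDerivAt_id t).smul_const w).const_add y
      exact ((hF.differentiable (by simp) _).hasFDerivAt.comp_hasDerivAt t hline).deriv
    rw [iteratedDeriv_succ', deriv_line, ih (contDiff_dirDeriv hF w)]
    rfl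

/-- The Taylor polynomial of `F` at `y` of degree less than `m`, evaluated at `x`. -/
def taylorPoly (m : ℕ) (F : E → G) (y x : E) : G :=
  ∑ k ∈ Finset.range m, (k.factorial : ℝ)⁻¹ • (dirDeriv (x - y))^[k] F y

lemma sub_taylorPoly_eq_integral [CompleteSpace G] {m : ℕ} (hF : ContDiff ℝ (m + 1 : ℕ) F)
    (x y : E) :
    F x - taylorPoly (m + 1) F y x =
      ∫ s in (0 : ℝ)..1,
        ((1 - s) ^ m / m.factorial) • (dirDeriv (x - y))^[m + 1] F (s • x + (1 - s) • y) := by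
  set f : ℝ → G := fun t => F (y + t • (x - y)) with hf
  have hf_smooth : ContDiff ℝ (m + 1 : ℕ) f := by fun_prop
  have within_eq {k : ℕ} (hk : k ≤ m + 1) {t : ℝ} (ht : t ∈ Set.uIcc (0 : ℝ) 1) :
      iteratedDerivWithin k f (Set.uIcc 0 1) t = (dirDeriv (x - y))^[k] F (y + t • (x - y)) := by
    rw [iteratedDerivWithin_eq_iteratedDeriv (uniqueDiffOn_uIcc zero_ne_one)
      ((hf_smooth.of_le (by exact_mod_cast hk)).contDiffAt) ht,
      iteratedDeriv_comp_line (hF.of_le (by exact_mod_cast hk))]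
  have poly_eq : taylorWithinEval f m (Set.uIcc 0 1) 0 1 = taylorPoly (m + 1) F y x := by
    rw [taylor_within_apply, taylorPoly]
    refine Finset.sum_congr rfl fun k hk => ?_
    rw [within_eq (Finset.mem_range.mp hk).le Set.left_mem_uIcc]
    simp
  have hf_one : f 1 = F x := by simp [hf]
  rw [← poly_eq, ← hf_one, taylor_integral_remainder hf_smooth.contDiffOn]
  refine intervalIntegral.integral_congr fun t ht => ?_
  rw [within_eq le_rfl ht, show y + t • (x - y) = t • x + (1 - t) • y by module]

end DirectionalDerivatives

section MixedPartials

/-- The mixed partial derivative `∂^(a+b) F / ∂u^a ∂v^b` of a function on the plane; this is the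
uncurried version of `pd`, see `pd_eq_mixedPartial`. -/
def mixedPartial (a b : ℕ) (F : ℝ × ℝ → ℝ) : ℝ × ℝ → ℝ :=
  (dirDeriv (1, 0))^[a] ((dirDeriv (0, 1))^[b] F)

variable {F : ℝ × ℝ → ℝ}

lemma contDiff_mixedPartial (a b : ℕ) {k : ℕ} (hF : ContDiff ℝ (k + a + b : ℕ) F) :
    ContDiff ℝ k (mixedPartial a b F) :=
  contDiff_iterate_dirDeriv _ a (contDiff_iterate_dirDeriv _ b hF)

lemma pd_eq_mixedPartial {g : ℝ → ℝ → ℝ} {a b : ℕ}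
    (hg : ContDiff ℝ (a + b : ℕ) fun q : ℝ × ℝ => g q.1 q.2) (q : ℝ × ℝ) :
    pd a b g q.1 q.2 = mixedPartial a b (fun q => g q.1 q.2) q := by
  have inner_eq (t : ℝ) : iteratedDeriv b (g t) q.2 =
      (dirDeriv (0, 1))^[b] (fun q : ℝ × ℝ => g q.1 q.2) (t, q.2) := by
    simpa using congrFun (iteratedDeriv_comp_line (hg.of_le (by norm_cast; lia)) (t, 0) (0, 1)) q.2
  have outer_eq := congrFun (iteratedDeriv_comp_line
    (contDiff_iterate_dirDeriv ((0, 1) : ℝ × ℝ) b hg) (0, q.2) (1, 0)) q.1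
  simpa [pd, inner_eq, mixedPartial] using outer_eq

lemma dirDeriv_mixedPartial (w : ℝ × ℝ) (a b : ℕ) (hF : ContDiff ℝ (a + b + 1 : ℕ) F)
    (z : ℝ × ℝ) : dirDeriv w (mixedPartial a b F) z =
      w.1 * mixedPartial (a + 1) b F z + w.2 * mixedPartial a (b + 1) F z := by
  have split : w = w.1 • ((1, 0) : ℝ × ℝ) + w.2 • ((0, 1) : ℝ × ℝ) := by simp
  have first : mixedPartial (a + 1) b F = dirDeriv (1, 0) (mixedPartial a b F) := by
    rw [mixedPartial, Function.iterate_succ_apply', mixedPartial]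
  have second : mixedPartial a (b + 1) F = dirDeriv (0, 1) (mixedPartial a b F) := by
    rw [mixedPartial, Function.iterate_succ_apply', mixedPartial,
      dirDeriv_iterate_comm _ (1, 0)]
    exact contDiff_iterate_dirDeriv _ b (k := a + 1) (by convert hF using 2; lia)
  rw [first, second, dirDeriv, split, map_add, map_smul, map_smul]
  simp [dirDeriv]

open Finset.HasAntidiagonal in
lemma iterate_dirDeriv_eq_sum (w : ℝ × ℝ) {k : ℕ} (hF : ContDiff ℝ k F) (z : ℝ × ℝ) :
    (dirDeriv w)^[k] F z = ∑ ij ∈ antidiagonal k,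
      (k.choose ij.1 : ℝ) * (w.1 ^ ij.1 * w.2 ^ ij.2 * mixedPartial ij.1 ij.2 F z) := by
  induction k generalizing z with
  | zero => simp [mixedPartial]
  | succ k ih =>
    have hsmooth {ij : ℕ × ℕ} (hij : ij ∈ antidiagonal k) :
        ContDiff ℝ (ij.1 + ij.2 + 1 : ℕ) F := by rwa [mem_antidiagonal.mp hij]
    have hdiff {ij : ℕ × ℕ} (hij : ij ∈ antidiagonal k) :
        DifferentiableAt ℝ (mixedPartial ij.1 ij.2 F) z :=
      (contDiff_mixedPartial ij.1 ij.2 (k := 1)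
        (by convert hsmooth hij using 2; lia)).differentiable (by norm_num) z
    rw [Function.iterate_succ_apply', funext (ih (hF.of_le (by norm_cast; lia))), dirDeriv,
      fderiv_fun_sum fun ij hij => ((hdiff hij).const_mul _).const_mul _,
      Finset.sum_antidiagonal_choose_succ_mul
        (fun a b => w.1 ^ a * w.2 ^ b * mixedPartial a b F z),
      ← Finset.sum_add_distrib, sum_apply]
    refine Finset.sum_congr rfl fun ij hij => ?_
    have choose_symm : k.choose ij.2 = k.choose ij.1 := by
      rw [← mem_antidiagonal.mp hij, Nat.choose_symm_add]
    have expand := dirDeriv_mixedPartial w ij.1 ij.2 (hsmooth hij) z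
    rw [dirDeriv] at expand
    rw [fderiv_const_mul ((hdiff hij).const_mul _), fderiv_const_mul (hdiff hij), choose_symm]
    simp only [smul_apply, smul_eq_mul, expand]
    ring

/-- The pointwise sum of squares of the partial derivatives of order `m`, the integrand of the
penalty `Omega2M`. -/
def sobolevDensity (m : ℕ) (F : ℝ × ℝ → ℝ) (z : ℝ × ℝ) : ℝ :=
  ∑ a ∈ Finset.range (m + 1), mixedPartial a (m - a) F z ^ 2

lemma sobolevDensity_nonneg (m : ℕ) (F : ℝ × ℝ → ℝ) (z : ℝ × ℝ) : 0 ≤ sobolevDensity m F z :=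
  Finset.sum_nonneg fun _ _ => sq_nonneg _

lemma continuous_mixedPartial {m a : ℕ} (hF : ContDiff ℝ m F) (ha : a ∈ Finset.range (m + 1)) :
    Continuous (mixedPartial a (m - a) F) := by
  have ham := Finset.mem_range_succ_iff.mp ha
  exact (contDiff_mixedPartial a (m - a) (k := 0) (by convert hF using 2; lia)).continuous

lemma continuous_sobolevDensity {m : ℕ} (hF : ContDiff ℝ m F) :
    Continuous (sobolevDensity m F) :=
  continuous_finsetSum _ fun _ ha => (continuous_mixedPartial hF ha).pow 2

lemma Omega2M_eq_integral_sobolevDensity {m : ℕ} {g : ℝ → ℝ → ℝ}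
    (hg : ContDiff ℝ m fun q : ℝ × ℝ => g q.1 q.2) :
    Omega2M m g = ∫ q in Set.Icc (0 : ℝ) 1 ×ˢ Set.Icc (0 : ℝ) 1,
      sobolevDensity m (fun q => g q.1 q.2) q := by
  simp only [sobolevDensity]
  rw [integral_finsetSum _ fun a ha => ContinuousOn.integrableOn_compact
    (isCompact_Icc.prod isCompact_Icc) (by
      have := continuous_mixedPartial hg ha
      fun_prop)]
  refine Finset.sum_congr rfl fun a ha => integral_congr_ae (.of_forall fun q => ?_)
  dsimp only
  rw [pd_eq_mixedPartial]
  rwa [Nat.add_sub_of_le (Finset.mem_range_succ_iff.mp ha)]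

end MixedPartials

section TaylorL2

lemma sq_integral_le_integral_sq {f : ℝ → ℝ} (hf : Continuous f) :
    (∫ s in (0 : ℝ)..1, f s) ^ 2 ≤ ∫ s in (0 : ℝ)..1, f s ^ 2 := by
  have : IsProbabilityMeasure (volume.restrict (Set.Ioc (0 : ℝ) 1)) :=
    ⟨by simp⟩
  simp only [intervalIntegral.integral_of_le zero_le_one]
  exact (even_two.convexOn_pow (𝕜 := ℝ)).map_integral_le (by fun_prop) isClosed_univ (by simp)
    (hf.integrableOn_Ioc) (Continuous.integrableOn_Ioc (by fun_prop))

open scoped Pointwise in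
-- The homothety `y ↦ s x + (1 - s) y` maps the convex set `Δ` into itself.
lemma integral_comp_contraction_le {E : Type*} [NormedAddCommGroup E] [NormedSpace ℝ E]
    [FiniteDimensional ℝ E] [MeasurableSpace E] [BorelSpace E] (μ : Measure E)
    [μ.IsAddHaarMeasure] {Δ : Set E} (hΔ : IsCompact Δ) (hconv : Convex ℝ Δ) {f : E → ℝ}
    (hf : Continuous f) (hf0 : ∀ z, 0 ≤ f z) {x : E} (hx : x ∈ Δ) {s : ℝ} (hs0 : 0 ≤ s)
    (hs1 : s < 1) :
    (1 - s) ^ Module.finrank ℝ E * ∫ y in Δ, f (s • x + (1 - s) • y) ∂μ ≤ ∫ y in Δ, f y ∂μ := by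
  have hpos : 0 < 1 - s := sub_pos.mpr hs1
  have image_subset : (1 - s) • Δ ⊆ (s • x + ·) ⁻¹' Δ := by
    rintro _ ⟨y, hy, rfl⟩
    exact hconv hx hy hs0 hpos.le (by ring)
  have hpre : IsCompact ((s • x + ·) ⁻¹' Δ) :=
    (Homeomorph.addLeft (s • x)).isCompact_preimage.mpr hΔ
  rw [Measure.setIntegral_comp_smul_of_pos μ (fun z => f (s • x + z)) Δ hpos, smul_eq_mul,
    mul_inv_cancel_left₀ (by positivity)]
  calc ∫ z in (1 - s) • Δ, f (s • x + z) ∂μ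
      ≤ ∫ z in (s • x + ·) ⁻¹' Δ, f (s • x + z) ∂μ :=
        setIntegral_mono_set (Continuous.continuousOn (by fun_prop) |>.integrableOn_compact hpre)
          (.of_forall fun z => hf0 _) image_subset.eventuallyLE
    _ = ∫ y in Δ, f y ∂μ :=
        (measurePreserving_add_left μ (s • x)).setIntegral_preimage_emb
          (measurableEmbedding_addLeft _) f Δ

lemma integral_integral_comp_contraction_le {E : Type*} [NormedAddCommGroup E]
    [NormedSpace ℝ E] [FiniteDimensional ℝ E] [MeasurableSpace E] [BorelSpace E] (μ : Measure E)
    [μ.IsAddHaarMeasure] {Δ : Set E} (hΔ : IsCompact Δ) (hconv : Convex ℝ Δ) {f : E → ℝ}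
    (hf : Continuous f) (hf0 : ∀ z, 0 ≤ f z) {x : E} (hx : x ∈ Δ) {k : ℕ}
    (hk : Module.finrank ℝ E ≤ k) :
    ∫ y in Δ, (∫ s in (0 : ℝ)..1, (1 - s) ^ k * f (s • x + (1 - s) • y)) ∂μ ≤
      ∫ y in Δ, f y ∂μ := by
  have hint : Integrable (Function.uncurry fun y s => (1 - s) ^ k * f (s • x + (1 - s) • y))
      ((μ.restrict Δ).prod (volume.restrict (Set.Ioc (0 : ℝ) 1))) := by
    rw [Measure.prod_restrict]
    exact (Continuous.continuousOn (by unfold Function.uncurry; fun_prop)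
      |>.integrableOn_compact (hΔ.prod isCompact_Icc)).mono_set
      (Set.prod_mono le_rfl Set.Ioc_subset_Icc_self)
  have slice_le {s : ℝ} (hs : s ∈ Set.Ioo (0 : ℝ) 1) :
      ∫ y in Δ, (1 - s) ^ k * f (s • x + (1 - s) • y) ∂μ ≤ ∫ y in Δ, f y ∂μ := by
    have hnonneg : 0 ≤ 1 - s := sub_nonneg.mpr hs.2.le
    rw [integral_const_mul]
    refine le_trans ?_ (integral_comp_contraction_le μ hΔ hconv hf hf0 hx hs.1.le hs.2)
    exact mul_le_mul_of_nonneg_right (pow_le_pow_of_le_one hnonneg (by linarith [hs.1]) hk)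
      (integral_nonneg fun y => hf0 _)
  simp only [intervalIntegral.integral_of_le (zero_le_one' ℝ)]
  rw [integral_integral_swap hint, integral_Ioc_eq_integral_Ioo]
  calc ∫ s in Set.Ioo (0 : ℝ) 1, ∫ y in Δ, (1 - s) ^ k * f (s • x + (1 - s) • y) ∂μ
      ≤ ∫ _s in Set.Ioo (0 : ℝ) 1, ∫ y in Δ, f y ∂μ :=
        setIntegral_mono_on (IntegrableOn.mono_set hint.integral_prod_right
          Set.Ioo_subset_Ioc_self) (by simp) measurableSet_Ioo fun s hs => slice_le hs
    _ = ∫ y in Δ, f y ∂μ := by simp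

lemma continuous_iterate_dirDeriv {k : ℕ} {F : ℝ × ℝ → ℝ} (hF : ContDiff ℝ k F) :
    Continuous fun q : (ℝ × ℝ) × (ℝ × ℝ) => (dirDeriv q.1)^[k] F q.2 := by
  simp only [iterate_dirDeriv_eq_sum _ hF]
  refine continuous_finsetSum _ fun ij hij => ?_
  have : Continuous (mixedPartial ij.1 ij.2 F) := (contDiff_mixedPartial ij.1 ij.2 (k := 0) (by
    rwa [zero_add, Finset.HasAntidiagonal.mem_antidiagonal.mp hij])).continuous
  fun_prop

lemma sum_choose_mul_pow_sq_le (m : ℕ) (w : ℝ × ℝ) :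
    ∑ a ∈ Finset.range (m + 1), ((m.choose a : ℝ) * (w.1 ^ a * w.2 ^ (m - a))) ^ 2 ≤
      4 ^ m * ‖w‖ ^ (2 * m) := by
  have term_le {a : ℕ} (ha : a ∈ Finset.range (m + 1)) :
      |w.1 ^ a * w.2 ^ (m - a)| ≤ ‖w‖ ^ m := by
    rw [abs_mul, abs_pow, abs_pow,
      ← pow_mul_pow_sub ‖w‖ (Finset.mem_range_succ_iff.mp ha)]
    gcongr
    · exact norm_fst_le w
    · exact norm_snd_le w
  have sum_choose : ∑ a ∈ Finset.range (m + 1), (m.choose a : ℝ) = 2 ^ m := by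
    exact_mod_cast Nat.sum_range_choose m
  calc ∑ a ∈ Finset.range (m + 1), ((m.choose a : ℝ) * (w.1 ^ a * w.2 ^ (m - a))) ^ 2
      = ∑ a ∈ Finset.range (m + 1), ((m.choose a : ℝ) * |w.1 ^ a * w.2 ^ (m - a)|) ^ 2 := by
        simp only [mul_pow _ _ 2, sq_abs]
    _ ≤ (∑ a ∈ Finset.range (m + 1), (m.choose a : ℝ) * |w.1 ^ a * w.2 ^ (m - a)|) ^ 2 :=
        Finset.sum_sq_le_sq_sum_of_nonneg fun _ _ => by positivity
    _ ≤ (∑ a ∈ Finset.range (m + 1), m.choose a * ‖w‖ ^ m) ^ 2 := by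
        gcongr with a ha
        exact term_le ha
    _ = 4 ^ m * ‖w‖ ^ (2 * m) := by
        rw [← Finset.sum_mul, sum_choose, mul_pow, ← pow_mul, ← pow_mul, mul_comm m 2, pow_mul]
        norm_num

lemma iterate_dirDeriv_sq_le {m : ℕ} {F : ℝ × ℝ → ℝ} (hF : ContDiff ℝ m F) (w z : ℝ × ℝ) :
    (dirDeriv w)^[m] F z ^ 2 ≤ 4 ^ m * ‖w‖ ^ (2 * m) * sobolevDensity m F z := by
  have expand : (dirDeriv w)^[m] F z = ∑ a ∈ Finset.range (m + 1),
      m.choose a * (w.1 ^ a * w.2 ^ (m - a)) * mixedPartial a (m - a) F z := by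
    rw [iterate_dirDeriv_eq_sum w hF, Finset.Nat.sum_antidiagonal_eq_sum_range_succ
      fun a b => (m.choose a : ℝ) * (w.1 ^ a * w.2 ^ b * mixedPartial a b F z)]
    exact Finset.sum_congr rfl fun a _ => by ring
  rw [expand]
  calc (∑ a ∈ Finset.range (m + 1), m.choose a * (w.1 ^ a * w.2 ^ (m - a)) *
        mixedPartial a (m - a) F z) ^ 2
      ≤ (∑ a ∈ Finset.range (m + 1), (m.choose a * (w.1 ^ a * w.2 ^ (m - a))) ^ 2) *
        sobolevDensity m F z := Finset.sum_mul_sq_le_sq_mul_sq _ _ _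
    _ ≤ 4 ^ m * ‖w‖ ^ (2 * m) * sobolevDensity m F z :=
        mul_le_mul_of_nonneg_right (sum_choose_mul_pow_sq_le m w) (sobolevDensity_nonneg m F z)

lemma sub_taylorPoly_sq_le {m : ℕ} {F : ℝ × ℝ → ℝ} (hF : ContDiff ℝ (m + 1 : ℕ) F)
    (x y : ℝ × ℝ) :
    (F x - taylorPoly (m + 1) F y x) ^ 2 ≤ 4 ^ (m + 1) * ‖x - y‖ ^ (2 * (m + 1)) *
      ∫ s in (0 : ℝ)..1,
        (1 - s) ^ (2 * m) * sobolevDensity (m + 1) F (s • x + (1 - s) • y) := by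
  have hD : Continuous fun s : ℝ => (dirDeriv (x - y))^[m + 1] F (s • x + (1 - s) • y) :=
    (continuous_iterate_dirDeriv hF).comp
      (by fun_prop : Continuous fun s : ℝ => (x - y, s • x + (1 - s) • y))
  have hS := continuous_sobolevDensity hF
  simp only [sub_taylorPoly_eq_integral hF, smul_eq_mul]
  refine (sq_integral_le_integral_sq (by fun_prop)).trans ?_
  rw [← intervalIntegral.integral_const_mul]
  refine intervalIntegral.integral_mono_on zero_le_one
    (Continuous.intervalIntegrable (by fun_prop) _ _)
    (Continuous.intervalIntegrable (by fun_prop) _ _) fun s _ => ?_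
  have weight_le : ((1 - s) ^ m / m.factorial) ^ 2 ≤ (1 - s) ^ (2 * m) := by
    rw [div_pow, ← pow_mul, mul_comm m 2]
    refine div_le_self ((even_two_mul m).pow_nonneg _) (one_le_pow₀ ?_)
    exact_mod_cast m.factorial_pos
  calc ((1 - s) ^ m / m.factorial * (dirDeriv (x - y))^[m + 1] F (s • x + (1 - s) • y)) ^ 2
      ≤ (1 - s) ^ (2 * m) * (4 ^ (m + 1) * ‖x - y‖ ^ (2 * (m + 1)) *
          sobolevDensity (m + 1) F (s • x + (1 - s) • y)) := by
        rw [mul_pow]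
        exact mul_le_mul weight_le (iterate_dirDeriv_sq_le hF _ _) (sq_nonneg _)
          ((even_two_mul m).pow_nonneg _)
    _ = _ := by ring

lemma continuous_taylorPoly {m : ℕ} {F : ℝ × ℝ → ℝ} (hF : ContDiff ℝ m F) (x : ℝ × ℝ) :
    Continuous fun y => taylorPoly m F y x := by
  refine continuous_finsetSum _ fun k hk => ?_
  have : Continuous fun y => (dirDeriv (x - y))^[k] F y :=
    (continuous_iterate_dirDeriv
      (hF.of_le (by exact_mod_cast (Finset.mem_range.mp hk).le))).comp
        (by fun_prop : Continuous fun y : ℝ × ℝ => (x - y, y))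
  fun_prop

lemma integral_sub_taylorPoly_sq_le {m : ℕ} (hm : 2 ≤ m) {F : ℝ × ℝ → ℝ} (hF : ContDiff ℝ m F)
    {Δ : Set (ℝ × ℝ)} (hΔ : IsCompact Δ) (hconv : Convex ℝ Δ) {δ : ℝ} {x : ℝ × ℝ} (hx : x ∈ Δ)
    (hδ : ∀ y ∈ Δ, ‖x - y‖ ≤ δ) :
    ∫ y in Δ, (F x - taylorPoly m F y x) ^ 2 ≤
      4 ^ m * δ ^ (2 * m) * ∫ y in Δ, sobolevDensity m F y := by
  obtain ⟨m, rfl⟩ := Nat.exists_eq_add_of_lt (Nat.zero_lt_of_lt hm)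
  simp only [zero_add] at *
  have hS := continuous_sobolevDensity hF
  have hT := continuous_taylorPoly hF x
  have hδ0 : 0 ≤ δ := (norm_nonneg _).trans (hδ x hx)
  calc ∫ y in Δ, (F x - taylorPoly (m + 1) F y x) ^ 2
      ≤ ∫ y in Δ, 4 ^ (m + 1) * δ ^ (2 * (m + 1)) * ∫ s in (0 : ℝ)..1,
          (1 - s) ^ (2 * m) * sobolevDensity (m + 1) F (s • x + (1 - s) • y) := by
        refine setIntegral_mono_on (Continuous.continuousOn (by fun_prop)
          |>.integrableOn_compact hΔ) (Continuous.continuousOn (by fun_prop)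
          |>.integrableOn_compact hΔ) hΔ.measurableSet fun y hy => ?_
        refine (sub_taylorPoly_sq_le hF x y).trans ?_
        gcongr
        · exact intervalIntegral.integral_nonneg zero_le_one fun s _ =>
            mul_nonneg ((even_two_mul m).pow_nonneg _) (sobolevDensity_nonneg _ _ _)
        · exact hδ y hy
    _ ≤ 4 ^ (m + 1) * δ ^ (2 * (m + 1)) * ∫ y in Δ, sobolevDensity (m + 1) F y := by
        rw [integral_const_mul]
        refine mul_le_mul_of_nonneg_left (integral_integral_comp_contraction_le volume hΔ hconv hS
          (sobolevDensity_nonneg _ _) hx ?_) (by positivity)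
        rw [Module.finrank_prod, Module.finrank_self]
        lia

end TaylorL2

section LocalPolynomials

/-- The span of the monomials `u^a v^b` with `a, b < m`, which contains all bivariate Taylor
polynomials of degree less than `m`. -/
def monomialSpan (m : ℕ) : Submodule ℝ (ℝ × ℝ → ℝ) :=
  Submodule.span ℝ (Set.range fun (q : Fin m × Fin m) (z : ℝ × ℝ) =>
    z.1 ^ (q.1 : ℕ) * z.2 ^ (q.2 : ℕ))

instance (m : ℕ) : FiniteDimensional ℝ (monomialSpan m) :=
  FiniteDimensional.span_of_finite ℝ (Set.finite_range _)

lemma finrank_monomialSpan_le (m : ℕ) : Module.finrank ℝ (monomialSpan m) ≤ m ^ 2 :=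
  (finrank_range_le_card _).trans (by simp [sq])

lemma shifted_monomial_mem_monomialSpan {m a b : ℕ} (ha : a < m) (hb : b < m) (y : ℝ × ℝ) :
    (fun z : ℝ × ℝ => (z.1 - y.1) ^ a * (z.2 - y.2) ^ b) ∈ monomialSpan m := by
  have expand : (fun z : ℝ × ℝ => (z.1 - y.1) ^ a * (z.2 - y.2) ^ b) =
      ∑ i ∈ Finset.range (a + 1), ∑ j ∈ Finset.range (b + 1),
        ((-y.1) ^ (a - i) * a.choose i * ((-y.2) ^ (b - j) * b.choose j)) •
          fun z : ℝ × ℝ => z.1 ^ i * z.2 ^ j := by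
    ext z
    simp only [sub_eq_add_neg, add_pow, Finset.sum_mul_sum, Finset.sum_apply, Pi.smul_apply,
      smul_eq_mul]
    exact Finset.sum_congr rfl fun i _ => Finset.sum_congr rfl fun j _ => by ring
  rw [expand]
  refine Submodule.sum_mem _ fun i hi => Submodule.sum_mem _ fun j hj =>
    Submodule.smul_mem _ _ (Submodule.subset_span ?_)
  exact ⟨(⟨i, (Finset.mem_range_succ_iff.mp hi).trans_lt ha⟩,
    ⟨j, (Finset.mem_range_succ_iff.mp hj).trans_lt hb⟩), rfl⟩

lemma taylorPoly_mem_monomialSpan {m : ℕ} {F : ℝ × ℝ → ℝ} (hF : ContDiff ℝ m F) (y : ℝ × ℝ) :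
    taylorPoly m F y ∈ monomialSpan m := by
  have expand : taylorPoly m F y = ∑ k ∈ Finset.range m, (k.factorial : ℝ)⁻¹ •
      ∑ ij ∈ Finset.HasAntidiagonal.antidiagonal k,
        (k.choose ij.1 * mixedPartial ij.1 ij.2 F y) •
          fun z : ℝ × ℝ => (z.1 - y.1) ^ ij.1 * (z.2 - y.2) ^ ij.2 := by
    ext z
    simp only [taylorPoly, Finset.sum_apply, Pi.smul_apply]
    refine Finset.sum_congr rfl fun k hk => ?_
    rw [iterate_dirDeriv_eq_sum _ (hF.of_le (by exact_mod_cast (Finset.mem_range.mp hk).le))]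
    congr 1
    refine Finset.sum_congr rfl fun ij _ => ?_
    simp only [smul_eq_mul, Prod.fst_sub, Prod.snd_sub]
    ring
  rw [expand]
  refine Submodule.sum_mem _ fun k hk => Submodule.smul_mem _ _ (Submodule.sum_mem _
    fun ij hij => Submodule.smul_mem _ _ ?_)
  have := Finset.mem_range.mp hk
  have := Finset.HasAntidiagonal.mem_antidiagonal.mp hij
  exact shifted_monomial_mem_monomialSpan (by lia) (by lia) y

end LocalPolynomials

section SobolevApproximation

variable {ι : Type*}

open Classical in
/-- Sampling a function at the points `z i` with `i ∈ S`, extended by zero to a vector indexed by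
all of `ι`. -/
def sampleOn {α : Type*} (z : ι → α) (S : Finset ι) : (α → ℝ) →ₗ[ℝ] EuclideanSpace ℝ ι :=
  (WithLp.linearEquiv 2 ℝ (ι → ℝ)).symm ∘ₗ
    LinearMap.pi fun i => if i ∈ S then LinearMap.proj (z i) else 0

lemma sampleOn_apply_of_mem {α : Type*} (z : ι → α) {S : Finset ι} (f : α → ℝ) {i : ι}
    (hi : i ∈ S) : sampleOn z S f i = f (z i) := by
  simp [sampleOn, hi]

lemma sampleOn_apply_of_notMem {α : Type*} (z : ι → α) {S : Finset ι} (f : α → ℝ) {i : ι}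
    (hi : i ∉ S) : sampleOn z S f i = 0 := by
  simp [sampleOn, hi]

/-- There is a linear space of dimension at most `d`, consisting of vectors supported on `S`,
which approximates the samples `F (z i)`, `i ∈ S`, of every `C^m` function `F` up to a squared
`ℓ²` error of `E` times the Sobolev energy of `F` on `Δ`. -/
def HasApprox (m : ℕ) (z : ι → ℝ × ℝ) (S : Finset ι) (Δ : Set (ℝ × ℝ)) (d E : ℝ) : Prop :=
  ∃ V : Submodule ℝ (EuclideanSpace ℝ ι), (Module.finrank ℝ V : ℝ) ≤ d ∧
    (∀ v ∈ V, ∀ i ∉ S, v i = 0) ∧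
    ∀ F : ℝ × ℝ → ℝ, ContDiff ℝ m F →
      ∃ v ∈ V, ∑ i ∈ S, (F (z i) - v i) ^ 2 ≤ E * ∫ y in Δ, sobolevDensity m F y

variable {m : ℕ} {z : ι → ℝ × ℝ} {S : Finset ι}

lemma hasApprox_mono {Δ : Set (ℝ × ℝ)} {d d' E E' : ℝ} (h : HasApprox m z S Δ d E) (hd : d ≤ d')
    (hE : E ≤ E') : HasApprox m z S Δ d' E' := by
  obtain ⟨V, hVd, hVS, hV⟩ := h
  refine ⟨V, hVd.trans hd, hVS, fun F hF => ?_⟩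
  obtain ⟨v, hv, hle⟩ := hV F hF
  exact ⟨v, hv, hle.trans (mul_le_mul_of_nonneg_right hE
    (integral_nonneg fun y => sobolevDensity_nonneg m F y))⟩

lemma hasApprox_taylor (hm : 2 ≤ m) {Δ : Set (ℝ × ℝ)} (hΔ : IsCompact Δ) (hconv : Convex ℝ Δ)
    (hvol : 0 < volume.real Δ) {δ : ℝ} (hδ : ∀ x ∈ Δ, ∀ y ∈ Δ, ‖x - y‖ ≤ δ)
    (hS : ∀ i ∈ S, z i ∈ Δ) :
    HasApprox m z S Δ (m ^ 2) (S.card * 4 ^ m * δ ^ (2 * m) / volume.real Δ) := by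
  refine ⟨(monomialSpan m).map (sampleOn z S), ?_, ?_, fun F hF => ?_⟩
  · exact_mod_cast (Submodule.finrank_map_le _ _).trans (finrank_monomialSpan_le m)
  · rintro _ ⟨f, -, rfl⟩ i hi
    exact sampleOn_apply_of_notMem z f hi
  have herr (i : ι) : Continuous fun y => (F (z i) - taylorPoly m F y (z i)) ^ 2 := by
    have := continuous_taylorPoly hF (z i)
    fun_prop
  -- Some expansion point does at least as well as the average over all expansion points in `Δ`.
  obtain ⟨y, -, hy⟩ := exists_le_setAverage (μ := volume) (s := Δ)
    (fun h => by simp [Measure.real, h] at hvol) hΔ.measure_lt_top.ne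
    ((continuous_finsetSum S fun i _ => herr i).continuousOn.integrableOn_compact hΔ)
  refine ⟨_, Submodule.mem_map_of_mem (taylorPoly_mem_monomialSpan hF y), ?_⟩
  calc ∑ i ∈ S, (F (z i) - sampleOn z S (taylorPoly m F y) i) ^ 2
      = ∑ i ∈ S, (F (z i) - taylorPoly m F y (z i)) ^ 2 :=
        Finset.sum_congr rfl fun i hi => by rw [sampleOn_apply_of_mem z _ hi]
    _ ≤ (volume.real Δ)⁻¹ * ∑ i ∈ S, ∫ y in Δ, (F (z i) - taylorPoly m F y (z i)) ^ 2 := by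
        rwa [setAverage_eq, smul_eq_mul, integral_finsetSum _ fun i _ =>
          (herr i).continuousOn.integrableOn_compact hΔ] at hy
    _ ≤ (volume.real Δ)⁻¹ * ∑ _i ∈ S, 4 ^ m * δ ^ (2 * m) * ∫ y in Δ, sobolevDensity m F y := by
        gcongr with i hi
        exact integral_sub_taylorPoly_sq_le hm hF hΔ hconv (hS i hi) (hδ _ (hS i hi))
    _ = _ := by
        rw [Finset.sum_const, nsmul_eq_mul]
        ring

/-- The closed square with lower left corner `(a, b)` and side length `h`. -/
def square (a b h : ℝ) : Set (ℝ × ℝ) := Set.Icc a (a + h) ×ˢ Set.Icc b (b + h)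

lemma hasApprox_square (hm : 2 ≤ m) {a b h : ℝ} (hh : 0 < h) (hS : ∀ i ∈ S, z i ∈ square a b h) :
    HasApprox m z S (square a b h) (m ^ 2) (S.card * 4 ^ m * h ^ (2 * m - 2)) := by
  have hvol : volume.real (square a b h) = h ^ 2 := by
    rw [square, Measure.volume_eq_prod, measureReal_prod_prod]
    simp [hh.le, sq]
  have hdiam : ∀ x ∈ square a b h, ∀ y ∈ square a b h, ‖x - y‖ ≤ h := by
    rintro x ⟨⟨hx₁, hx₂⟩, ⟨hx₃, hx₄⟩⟩ y ⟨⟨hy₁, hy₂⟩, ⟨hy₃, hy₄⟩⟩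
    rw [Prod.norm_def, max_le_iff, Real.norm_eq_abs, Real.norm_eq_abs, abs_le, abs_le,
      Prod.fst_sub, Prod.snd_sub]
    exact ⟨⟨by linarith, by linarith⟩, ⟨by linarith, by linarith⟩⟩
  have hpow : h ^ (2 * m) = h ^ (2 * m - 2) * h ^ 2 := by rw [← pow_add]; congr 1; lia
  have htaylor := hasApprox_taylor (Δ := square a b h) hm (isCompact_Icc.prod isCompact_Icc)
    ((convex_Icc _ _).prod (convex_Icc _ _)) (by rw [hvol]; positivity) hdiam hS
  rwa [hvol, hpow, ← mul_assoc, mul_div_cancel_right₀ _ (by positivity)] at htaylor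

lemma aedisjoint_Icc_Icc (a b c : ℝ) : AEDisjoint volume (Set.Icc a b) (Set.Icc b c) :=
  measure_mono_null (fun _ hx => le_antisymm hx.1.2 hx.2.1) Real.volume_singleton

section Partition

variable [Finite ι]

lemma hasApprox_union {p : ι → Prop} [DecidablePred p] {Δ₁ Δ₂ : Set (ℝ × ℝ)} {d₁ d₂ E : ℝ}
    (hΔ₁ : IsCompact Δ₁) (hΔ₂ : IsCompact Δ₂) (hdisj : AEDisjoint volume Δ₁ Δ₂)
    (h₁ : HasApprox m z {i ∈ S | p i} Δ₁ d₁ E) (h₂ : HasApprox m z {i ∈ S | ¬ p i} Δ₂ d₂ E) :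
    HasApprox m z S (Δ₁ ∪ Δ₂) (d₁ + d₂) E := by
  obtain ⟨V₁, hd₁, hsupp₁, happrox₁⟩ := h₁
  obtain ⟨V₂, hd₂, hsupp₂, happrox₂⟩ := h₂
  simp only [Finset.mem_filter, not_and, not_not] at hsupp₁ hsupp₂
  refine ⟨V₁ ⊔ V₂, ?_, fun v hv i hi => ?_, fun F hF => ?_⟩
  · have : (Module.finrank ℝ ↥(V₁ ⊔ V₂) : ℝ) ≤ Module.finrank ℝ V₁ + Module.finrank ℝ V₂ := by
      exact_mod_cast Submodule.finrank_add_le_finrank_add_finrank V₁ V₂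
    linarith
  · obtain ⟨v₁, hv₁, v₂, hv₂, rfl⟩ := Submodule.mem_sup.mp hv
    simp [hsupp₁ v₁ hv₁ i (absurd · hi), hsupp₂ v₂ hv₂ i (absurd · hi)]
  obtain ⟨v₁, hv₁, hle₁⟩ := happrox₁ F hF
  obtain ⟨v₂, hv₂, hle₂⟩ := happrox₂ F hF
  have integrable {Δ : Set (ℝ × ℝ)} (hΔ : IsCompact Δ) : IntegrableOn (sobolevDensity m F) Δ :=
    (continuous_sobolevDensity hF).continuousOn.integrableOn_compact hΔ
  refine ⟨v₁ + v₂, Submodule.add_mem_sup hv₁ hv₂, ?_⟩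
  rw [setIntegral_union₀ hdisj hΔ₂.measurableSet.nullMeasurableSet (integrable hΔ₁)
    (integrable hΔ₂), mul_add, ← Finset.sum_filter_add_sum_filter_not S p]
  refine add_le_add (hle₁.trans_eq' ?_) (hle₂.trans_eq' ?_) <;>
    refine Finset.sum_congr rfl fun i hi => ?_
  · simp [hsupp₂ v₂ hv₂ i fun _ => (Finset.mem_filter.mp hi).2]
  · simp [hsupp₁ v₁ hv₁ i fun _ h => absurd h (Finset.mem_filter.mp hi).2]

lemma hasApprox_split_fst {a b c d e d₁ d₂ E : ℝ} (hc : c ∈ Set.Icc a b)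
    (h₁ : HasApprox m z {i ∈ S | (z i).1 ≤ c} (Set.Icc a c ×ˢ Set.Icc d e) d₁ E)
    (h₂ : HasApprox m z {i ∈ S | ¬ (z i).1 ≤ c} (Set.Icc c b ×ˢ Set.Icc d e) d₂ E) :
    HasApprox m z S (Set.Icc a b ×ˢ Set.Icc d e) (d₁ + d₂) E := by
  rw [← Set.Icc_union_Icc_eq_Icc hc.1 hc.2, Set.union_prod]
  refine hasApprox_union (isCompact_Icc.prod isCompact_Icc) (isCompact_Icc.prod isCompact_Icc)
    ?_ h₁ h₂
  rw [AEDisjoint, Set.prod_inter_prod, Measure.volume_eq_prod, Measure.prod_prod,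
    aedisjoint_Icc_Icc, zero_mul]

lemma hasApprox_split_snd {a b c d e d₁ d₂ E : ℝ} (hc : c ∈ Set.Icc d e)
    (h₁ : HasApprox m z {i ∈ S | (z i).2 ≤ c} (Set.Icc a b ×ˢ Set.Icc d c) d₁ E)
    (h₂ : HasApprox m z {i ∈ S | ¬ (z i).2 ≤ c} (Set.Icc a b ×ˢ Set.Icc c e) d₂ E) :
    HasApprox m z S (Set.Icc a b ×ˢ Set.Icc d e) (d₁ + d₂) E := by
  rw [← Set.Icc_union_Icc_eq_Icc hc.1 hc.2, Set.prod_union]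
  refine hasApprox_union (isCompact_Icc.prod isCompact_Icc) (isCompact_Icc.prod isCompact_Icc)
    ?_ h₁ h₂
  rw [AEDisjoint, Set.prod_inter_prod, Measure.volume_eq_prod, Measure.prod_prod,
    aedisjoint_Icc_Icc, mul_zero]

lemma hasApprox_of_quarters {a b h A B E : ℝ} (hh : 0 < h)
    (hquarter : ∀ S' ⊆ S, ∀ a' b', (∀ i ∈ S', z i ∈ square a' b' h) →
      HasApprox m z S' (square a' b' h) (A + B * S'.card) E)
    (hS : ∀ i ∈ S, z i ∈ square a b (2 * h)) :
    HasApprox m z S (square a b (2 * h)) (4 * A + B * S.card) E := by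
  simp only [square, Set.mem_prod, Set.mem_Icc] at hquarter hS ⊢
  have double (c : ℝ) : c + h + h = c + 2 * h := by ring
  have strip (T : Finset ι) (hT : T ⊆ S) (a' : ℝ)
      (hTa : ∀ i ∈ T, a' ≤ (z i).1 ∧ (z i).1 ≤ a' + h) :
      HasApprox m z T (Set.Icc a' (a' + h) ×ˢ Set.Icc b (b + 2 * h)) (2 * A + B * T.card) E := by
    have bottom := hquarter {i ∈ T | (z i).2 ≤ b + h} ((Finset.filter_subset _ _).trans hT) a' b
      fun i hi => by
        rw [Finset.mem_filter] at hi
        exact ⟨hTa i hi.1, (hS i (hT hi.1)).2.1, hi.2⟩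
    have top := hquarter {i ∈ T | ¬ (z i).2 ≤ b + h} ((Finset.filter_subset _ _).trans hT) a'
      (b + h) fun i hi => by
        rw [Finset.mem_filter, not_le] at hi
        exact ⟨hTa i hi.1, hi.2.le, by linarith [(hS i (hT hi.1)).2.2]⟩
    rw [double] at top
    refine hasApprox_mono (hasApprox_split_snd ⟨by linarith, by linarith⟩ bottom top) ?_ le_rfl
    rw [← Finset.card_filter_add_card_filter_not (s := T) (fun i => (z i).2 ≤ b + h)]
    push_cast
    linarith
  have left := strip {i ∈ S | (z i).1 ≤ a + h} (Finset.filter_subset _ _) a fun i hi => by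
    rw [Finset.mem_filter] at hi
    exact ⟨(hS i hi.1).1.1, hi.2⟩
  have right := strip {i ∈ S | ¬ (z i).1 ≤ a + h} (Finset.filter_subset _ _) (a + h)
    fun i hi => by
      rw [Finset.mem_filter, not_le] at hi
      exact ⟨hi.2.le, by linarith [(hS i hi.1).1.2]⟩
  rw [double] at right
  refine hasApprox_mono (hasApprox_split_fst ⟨by linarith, by linarith⟩ left right) ?_ le_rfl
  rw [← Finset.card_filter_add_card_filter_not (s := S) (fun i => (z i).1 ≤ a + h)]
  push_cast
  linarith

-- Squares are quartered only while the Taylor bound exceeds the target error `E`, which cannot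
-- happen on squares containing few of the points.
lemma hasApprox_square_adaptive (hm : 2 ≤ m) {E : ℝ} (hE : 0 < E) {a b h : ℝ} (hh : 0 < h)
    (hS : ∀ i ∈ S, z i ∈ square a b h) :
    HasApprox m z S (square a b h)
      (m ^ 2 + 4 * m ^ 2 * (4 ^ m / E * h ^ (2 * m - 2)) * S.card) E := by
  obtain ⟨j, hj⟩ := pow_unbounded_of_one_lt (4 ^ m / E * h ^ (2 * m - 2) * S.card)
    (one_lt_pow₀ (one_lt_two (α := ℝ)) (show 2 * m - 2 ≠ 0 by lia))
  have leaf {S : Finset ι} {a b h : ℝ} (hh : 0 < h) (hS : ∀ i ∈ S, z i ∈ square a b h)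
      (hfew : 4 ^ m / E * h ^ (2 * m - 2) * S.card ≤ 1) : HasApprox m z S (square a b h)
      (m ^ 2 + 4 * m ^ 2 * (4 ^ m / E * h ^ (2 * m - 2)) * S.card) E := by
    refine hasApprox_mono (hasApprox_square hm hh hS) (le_add_of_nonneg_right (by positivity)) ?_
    calc (S.card : ℝ) * 4 ^ m * h ^ (2 * m - 2)
        = E * (4 ^ m / E * h ^ (2 * m - 2) * S.card) := by field_simp
      _ ≤ E := mul_le_of_le_one_right hE.le hfew
  induction j generalizing S a b h with
  | zero => exact leaf hh hS (by simpa using hj.le)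
  | succ j ih =>
    by_cases hfew : 4 ^ m / E * h ^ (2 * m - 2) * S.card ≤ 1
    · exact leaf hh hS hfew
    set w := 4 ^ m / E * (h / 2) ^ (2 * m - 2) with hw
    have hw0 : 0 < w := by positivity
    have scale : 4 ^ m / E * h ^ (2 * m - 2) = 2 ^ (2 * m - 2) * w := by
      rw [hw, div_pow]
      field_simp
    have four_le : (4 : ℝ) ≤ 2 ^ (2 * m - 2) := by
      calc (4 : ℝ) = 2 ^ 2 := by norm_num
        _ ≤ 2 ^ (2 * m - 2) := pow_le_pow_right₀ one_le_two (by lia)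
    rw [scale] at hj hfew ⊢
    rw [← mul_div_cancel₀ h (two_ne_zero' ℝ)] at hS ⊢
    refine hasApprox_mono (hasApprox_of_quarters (A := m ^ 2) (B := 4 * m ^ 2 * w) (by positivity)
      (fun S' hS' a' b' hmem => ih (by positivity) hmem ?_) hS) ?_ le_rfl
    · rw [pow_succ', mul_assoc, mul_lt_mul_iff_right₀ (by positivity)] at hj
      refine hj.trans_le' ?_
      gcongr
    · have : 4 * (w * S.card) ≤ 2 ^ (2 * m - 2) * (w * S.card) := by gcongr
      nlinarith [sq_nonneg (m : ℝ)]

lemma hasApprox_square_uniform (hm : 2 ≤ m) {E : ℝ} (hE : 0 < E) (j : ℕ) {a b h : ℝ} (hh : 0 < h)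
    (hS : ∀ i ∈ S, z i ∈ square a b h) :
    HasApprox m z S (square a b h)
      (4 ^ j * m ^ 2 + 4 * m ^ 2 * (4 ^ m / E * (h / 2 ^ j) ^ (2 * m - 2)) * S.card) E := by
  induction j generalizing S a b h with
  | zero => simpa using hasApprox_square_adaptive hm hE hh hS
  | succ j ih =>
    rw [← mul_div_cancel₀ h (two_ne_zero' ℝ)] at hS
    have := hasApprox_of_quarters (by positivity)
      (fun S' _ a' b' hmem => ih (by positivity) hmem) hS
    rw [div_div, ← pow_succ', mul_div_cancel₀ h (two_ne_zero' ℝ)] at this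
    rwa [pow_succ', mul_assoc]

end Partition

lemma exists_submodule_norm_sq_sub_le [Fintype ι] [Nonempty ι] (hm : 2 ≤ m)
    (hz : ∀ i, z i ∈ Set.Icc (0 : ℝ) 1 ×ˢ Set.Icc (0 : ℝ) 1) (L : ℕ) :
    ∃ V : Submodule ℝ (EuclideanSpace ℝ ι), (Module.finrank ℝ V : ℝ) ≤ 5 * m ^ 2 * 4 ^ L ∧
      ∀ g : ℝ → ℝ → ℝ, ContDiff ℝ m (fun q : ℝ × ℝ => g q.1 q.2) → ∃ v ∈ V,
        ‖WithLp.toLp 2 (fun i => g (z i).1 (z i).2) - v‖ ^ 2 ≤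
          Fintype.card ι * 4 ^ m / 4 ^ (L * m) * Omega2M m g := by
  set E : ℝ := Fintype.card ι * 4 ^ m / 4 ^ (L * m) with hE
  have count : 4 ^ m / E * (1 / 2 ^ L) ^ (2 * m - 2) * Fintype.card ι = 4 ^ L := by
    have pow_split : (4 : ℝ) ^ (L * m) = 4 ^ L * (2 ^ L) ^ (2 * m - 2) := by
      rw [show (4 : ℝ) = 2 ^ 2 by norm_num]
      simp only [← pow_mul, ← pow_add]
      congr 1
      obtain ⟨k, rfl⟩ := Nat.exists_eq_add_of_le hm
      grind
    rw [hE, pow_split, one_div, inv_pow]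
    field_simp
  obtain ⟨V, hV, -, happrox⟩ := hasApprox_square_uniform (S := Finset.univ) (a := 0) (b := 0) hm
    (by positivity : 0 < E) L one_pos (by simpa [square] using hz)
  refine ⟨V, hV.trans_eq ?_, fun g hg => ?_⟩
  · rw [Finset.card_univ, mul_assoc (4 * (m : ℝ) ^ 2), count]
    ring
  obtain ⟨v, hv, hle⟩ := happrox _ hg
  refine ⟨v, hv, ?_⟩
  simpa [EuclideanSpace.norm_sq_eq, Omega2M_eq_integral_sobolevDensity hg, square] using hle

end SobolevApproximation

section Chaining

open Module

lemma norm_succ_sub_le_of_norm_sub_le_geometric {F : Type*} [SeminormedAddCommGroup F] {g : F}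
    {v : ℕ → F} {s : ℝ} (hv : ∀ i, ‖g - v i‖ ≤ s * (1 / 4) ^ i) (i : ℕ) :
    ‖v (i + 1) - v i‖ ≤ 2 * s * (1 / 4) ^ i := by
  have triangle := norm_sub_le_norm_sub_add_norm_sub (v (i + 1)) g (v i)
  rw [norm_sub_rev (v (i + 1)) g] at triangle
  have next := hv (i + 1)
  rw [pow_succ] at next
  linarith [hv i, (norm_nonneg _).trans (hv i)]

lemma tendsto_of_norm_sub_le_geometric {F : Type*} [SeminormedAddCommGroup F] {g : F} {v : ℕ → F}
    {s : ℝ} (hv : ∀ i, ‖g - v i‖ ≤ s * (1 / 4) ^ i) :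
    Filter.Tendsto v Filter.atTop (nhds g) := by
  rw [tendsto_iff_norm_sub_tendsto_zero]
  refine squeeze_zero (fun _ => norm_nonneg _) (fun i => norm_sub_rev g (v i) ▸ hv i) ?_
  simpa using (tendsto_pow_atTop_nhds_zero_of_lt_one (r := (1 / 4 : ℝ))
    (by norm_num) (by norm_num)).const_mul s

lemma finrank_iSup_le_card_mul {ι K V : Type*} [Fintype ι] [DivisionRing K] [AddCommGroup V]
    [Module K V] [FiniteDimensional K V] {W : ι → Submodule K V} {d : ℝ}
    (hW : ∀ c, (finrank K (W c) : ℝ) ≤ d) :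
    (finrank K (⨆ c, W c : Submodule K V) : ℝ) ≤ Fintype.card ι * d := by
  have sup_le (s : Finset ι) : (finrank K (s.sup W : Submodule K V) : ℝ) ≤ s.card * d := by
    classical
    induction s using Finset.induction_on with
    | empty => simp
    | insert c s hc ih =>
      rw [Finset.sup_insert, Finset.card_insert_of_notMem hc]
      have : (finrank K (W c ⊔ s.sup W : Submodule K V) : ℝ) ≤
          finrank K (W c) + finrank K (s.sup W : Submodule K V) := by
        exact_mod_cast Submodule.finrank_add_le_finrank_add_finrank _ _
      push_cast
      linarith [hW c]
  rw [← Finset.sup_univ_eq_iSup, ← Finset.card_univ]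
  exact sup_le Finset.univ

lemma exists_fin_map_subset_range {α : Type*} [Nonempty α] {J : Finset α} {M : ℕ}
    (h : J.card ≤ M) : ∃ τ : Fin M → α, (J : Set α) ⊆ Set.range τ := by
  obtain ⟨f⟩ := Function.Embedding.nonempty_of_card_le (α := J) (β := Fin M) (by simpa using h)
  exact ⟨Function.extend f (↑) fun _ => Classical.arbitrary α,
    fun q hq => ⟨f ⟨q, hq⟩, f.injective.extend_apply _ _ _⟩⟩

lemma sqrt_add_nat_mul_log_two_le {t : ℝ} (ht : 0 ≤ t) (D : ℝ) (i : ℕ) :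
    √(4 * (t + (i + 1) * Real.log 2 + D * 4 ^ i)) ≤ 2 ^ i * √(4 * (t + Real.log 2 + D)) := by
  have one_le : (1 : ℝ) ≤ 4 ^ i := one_le_pow₀ (by norm_num)
  have succ_le : (i : ℝ) + 1 ≤ 4 ^ i := by
    exact_mod_cast Nat.lt_pow_self (n := i) (a := 4) (by norm_num)
  calc √(4 * (t + (i + 1) * Real.log 2 + D * 4 ^ i))
      ≤ √(4 * (4 ^ i * t + 4 ^ i * Real.log 2 + D * 4 ^ i)) := by
        gcongr; exact le_mul_of_one_le_left ht one_le
    _ = √((2 ^ i) ^ 2 * (4 * (t + Real.log 2 + D))) := by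
        rw [← pow_mul, mul_comm i, pow_mul, show (2 : ℝ) ^ 2 = 4 by norm_num]; ring_nf
    _ = 2 ^ i * √(4 * (t + Real.log 2 + D)) := by
        rw [Real.sqrt_mul (by positivity), Real.sqrt_sq (by positivity)]

variable {E : Type*} [NormedAddCommGroup E] [InnerProductSpace ℝ E]

/-- Geometric approximability: `g` is within `s * 4 ^ (-i)` of the `i`-th subspace of the scale
`V`, for every `i`. -/
def IsApproximable (V : ℕ → Submodule ℝ E) (s : ℝ) (g : E) : Prop :=
  ∀ i, ∃ v ∈ V i, ‖g - v‖ ≤ s * (1 / 4) ^ i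

/-- The event on which chaining along the scale `W` works: the functional `⟪ξ, ·⟫` has norm at most
`2 ^ i * a` on `W i`. The growth `2 ^ i` is the square root of that of `finrank (W i)`, hence the
one to expect of a standard Gaussian `ξ`. -/
def IsChainBounded (W : ℕ → Submodule ℝ E) (a : ℝ) (ξ : E) : Prop :=
  ∀ i, ∀ w ∈ W i, inner ℝ ξ w ≤ 2 ^ i * a * ‖w‖

namespace IsChainBounded

variable {W : ℕ → Submodule ℝ E} {a : ℝ} {ξ : E}

lemma inner_sub_le_of_norm_sub_le_geometric (hξ : IsChainBounded W a ξ) (ha : 0 ≤ a) {g : E}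
    {v : ℕ → E} {s : ℝ} (hvW : ∀ i, v (i + 1) - v i ∈ W i)
    (hv : ∀ i, ‖g - v i‖ ≤ s * (1 / 4) ^ i) : inner ℝ ξ (g - v 0) ≤ 4 * a * s := by
  have hs : 0 ≤ s := by simpa using (norm_nonneg _).trans (hv 0)
  have link_le (i : ℕ) : inner ℝ ξ (v (i + 1) - v i) ≤ 2 * a * s * (1 / 2) ^ i :=
    calc inner ℝ ξ (v (i + 1) - v i) ≤ 2 ^ i * a * ‖v (i + 1) - v i‖ := hξ i _ (hvW i)
      _ ≤ 2 ^ i * a * (2 * s * (1 / 4) ^ i) := by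
          gcongr; exact norm_succ_sub_le_of_norm_sub_le_geometric hv i
      _ = 2 * a * s * (2 * (1 / 4)) ^ i := by rw [mul_pow]; ring
      _ = 2 * a * s * (1 / 2) ^ i := by norm_num
  have chain_le (I : ℕ) : inner ℝ ξ (v I - v 0) ≤ 4 * a * s :=
    calc inner ℝ ξ (v I - v 0) = ∑ i ∈ Finset.range I, inner ℝ ξ (v (i + 1) - v i) := by
          rw [← Finset.sum_range_sub, inner_sum]
      _ ≤ ∑ i ∈ Finset.range I, 2 * a * s * (1 / 2) ^ i := Finset.sum_le_sum fun i _ => link_le i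
      _ ≤ 2 * a * s * 2 := by
          rw [← Finset.mul_sum]; gcongr; exact sum_geometric_two_le I
      _ = 4 * a * s := by ring
  exact le_of_tendsto'
    (tendsto_const_nhds.inner ((tendsto_of_norm_sub_le_geometric hv).sub_const _)) chain_le

lemma exists_inner_sub_le (hξ : IsChainBounded W a ξ) (ha : 0 ≤ a) {V : ℕ → Submodule ℝ E}
    (hVW : ∀ i, V i ⊔ V (i + 1) ≤ W i) {g : E} {s : ℝ} (hg : IsApproximable V s g) :
    ∃ v ∈ W 0, ‖g - v‖ ≤ s ∧ inner ℝ ξ (g - v) ≤ 4 * a * s := by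
  choose v hvV hv using hg
  have mem_left (i : ℕ) : v i ∈ W i := hVW i (Submodule.mem_sup_left (hvV i))
  have mem_right (i : ℕ) : v (i + 1) ∈ W i := hVW i (Submodule.mem_sup_right (hvV (i + 1)))
  exact ⟨v 0, mem_left 0, by simpa using hv 0, hξ.inner_sub_le_of_norm_sub_le_geometric ha
    (fun i => (W i).sub_mem (mem_right i) (mem_left i)) hv⟩

lemma inner_sum_le (hξ : IsChainBounded W a ξ) (ha : 0 ≤ a) {Q : Type*} {J : Finset Q}
    {V : Q → ℕ → Submodule ℝ E} (hVW : ∀ q ∈ J, ∀ i, V q i ⊔ V q (i + 1) ≤ W i)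
    {g : Q → E} {s : Q → ℝ} (hg : ∀ q ∈ J, IsApproximable (V q) (s q) (g q)) :
    inner ℝ ξ (∑ q ∈ J, g q) ≤ a * (‖∑ q ∈ J, g q‖ + 5 * ∑ q ∈ J, s q) := by
  choose! v hvW hv_norm hv_inner using fun q hq => hξ.exists_inner_sub_le ha (hVW q hq) (hg q hq)
  have coarse_le : inner ℝ ξ (∑ q ∈ J, v q) ≤ a * (‖∑ q ∈ J, g q‖ + ∑ q ∈ J, s q) :=
    calc inner ℝ ξ (∑ q ∈ J, v q) ≤ a * ‖∑ q ∈ J, v q‖ := by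
          simpa using hξ 0 _ ((W 0).sum_mem hvW)
      _ ≤ a * (‖∑ q ∈ J, g q‖ + ‖∑ q ∈ J, (g q - v q)‖) := by
          rw [Finset.sum_sub_distrib]; gcongr; exact norm_le_norm_add_norm_sub _ _
      _ ≤ a * (‖∑ q ∈ J, g q‖ + ∑ q ∈ J, s q) := by
          gcongr; exact norm_sum_le_of_le J hv_norm
  have fine_le : inner ℝ ξ (∑ q ∈ J, (g q - v q)) ≤ 4 * a * ∑ q ∈ J, s q := by
    rw [inner_sum, Finset.mul_sum]
    exact Finset.sum_le_sum hv_inner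
  rw [Finset.sum_sub_distrib, inner_sub_right] at fine_le
  linarith

end IsChainBounded

variable [FiniteDimensional ℝ E] [MeasurableSpace E] [BorelSpace E]

lemma stdGaussian_not_isChainBounded_le {W : ℕ → Submodule ℝ E} {D t : ℝ}
    (hW : ∀ i, (finrank ℝ (W i) : ℝ) ≤ D * 4 ^ i) (ht : 0 ≤ t) :
    stdGaussian E {ξ | ¬ IsChainBounded W √(4 * (t + Real.log 2 + D)) ξ} ≤
      ENNReal.ofReal (Real.exp (-t)) := by
  have exp_level (i : ℕ) : Real.exp (-(t + (i + 1) * Real.log 2)) =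
      Real.exp (-t) / 2 / 2 ^ i := by
    rw [neg_add, Real.exp_add, Real.exp_neg (_ * _), ← Nat.cast_succ, Real.exp_nat_mul,
      Real.exp_log two_pos, pow_succ]
    ring
  calc stdGaussian E {ξ | ¬ IsChainBounded W √(4 * (t + Real.log 2 + D)) ξ}
      ≤ stdGaussian E (⋃ i : ℕ, {ξ | ∃ w ∈ W i,
          √(4 * (t + (i + 1) * Real.log 2 + D * 4 ^ i)) * ‖w‖ < inner ℝ ξ w}) := by
        refine measure_mono fun ξ hξ => ?_
        simp only [IsChainBounded, Set.mem_ofPred_eq, not_forall, not_le] at hξ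
        obtain ⟨i, w, hw, hlt⟩ := hξ
        refine Set.mem_iUnion.mpr ⟨i, w, hw, lt_of_le_of_lt ?_ hlt⟩
        gcongr
        exact sqrt_add_nat_mul_log_two_le ht D i
    _ ≤ ∑' i : ℕ, ENNReal.ofReal (Real.exp (-t) / 2 / 2 ^ i) := by
        refine (measure_iUnion_le _).trans (ENNReal.tsum_le_tsum fun i => ?_)
        rw [← exp_level]
        exact stdGaussian_exists_lt_inner_le (W i) (hW i) _
    _ = ENNReal.ofReal (Real.exp (-t)) := by
        rw [← ENNReal.ofReal_tsum_of_nonneg (fun i => by positivity) (summable_geometric_two' _),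
          tsum_geometric_two']

lemma stdGaussian_exists_not_isChainBounded_le {T : Type*} [Fintype T] [Nonempty T]
    {W : T → ℕ → Submodule ℝ E} {D t : ℝ} (hW : ∀ τ i, (finrank ℝ (W τ i) : ℝ) ≤ D * 4 ^ i)
    (ht : 0 ≤ t) :
    stdGaussian E {ξ | ∃ τ, ¬ IsChainBounded (W τ)
        √(4 * (Real.log (Fintype.card T) + t + Real.log 2 + D)) ξ} ≤
      ENNReal.ofReal (Real.exp (-t)) := by
  have card_pos : (0 : ℝ) < Fintype.card T := by exact_mod_cast Fintype.card_pos
  rw [Set.ofPred_exists]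
  calc stdGaussian E (⋃ τ, {ξ | ¬ IsChainBounded (W τ)
          √(4 * (Real.log (Fintype.card T) + t + Real.log 2 + D)) ξ})
      ≤ ∑ _τ : T, ENNReal.ofReal (Real.exp (-(Real.log (Fintype.card T) + t))) :=
        (measure_iUnion_fintype_le _ _).trans <| Finset.sum_le_sum fun τ _ =>
          stdGaussian_not_isChainBounded_le (hW τ)
            (add_nonneg (Real.log_natCast_nonneg _) ht)
    _ = ENNReal.ofReal (Real.exp (-t)) := by
        rw [Finset.sum_const, Finset.card_univ, nsmul_eq_mul, ← ENNReal.ofReal_natCast,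
          ← ENNReal.ofReal_mul card_pos.le, neg_add, Real.exp_add, Real.exp_neg,
          Real.exp_log card_pos, mul_inv_cancel_left₀ card_pos.ne']

lemma stdGaussian_not_inner_sum_le {Q : Type*} [Fintype Q] [Nonempty Q]
    {V : Q → ℕ → Submodule ℝ E} {D t : ℝ} (hV : ∀ q i, (finrank ℝ (V q i) : ℝ) ≤ D * 4 ^ i)
    (ht : 0 ≤ t) (M : ℕ) :
    stdGaussian E {ξ | ¬ ∀ J : Finset Q, J.card ≤ M → ∀ (g : Q → E) (s : Q → ℝ),
        (∀ q ∈ J, IsApproximable (V q) (s q) (g q)) →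
        inner ℝ ξ (∑ q ∈ J, g q) ≤
          √(4 * (M * Real.log (Fintype.card Q) + t + Real.log 2 + M * (5 * D))) *
            (‖∑ q ∈ J, g q‖ + 5 * ∑ q ∈ J, s q)} ≤
      ENNReal.ofReal (Real.exp (-t)) := by
  have finrank_sup_le (q : Q) (i : ℕ) :
      (finrank ℝ (V q i ⊔ V q (i + 1) : Submodule ℝ E) : ℝ) ≤ 5 * D * 4 ^ i := by
    have : (finrank ℝ (V q i ⊔ V q (i + 1) : Submodule ℝ E) : ℝ) ≤
        finrank ℝ (V q i) + finrank ℝ (V q (i + 1)) := by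
      exact_mod_cast Submodule.finrank_add_le_finrank_add_finrank _ _
    have next := hV q (i + 1)
    rw [pow_succ] at next
    linarith [hV q i]
  let W (τ : Fin M → Q) (i : ℕ) : Submodule ℝ E := ⨆ c, V (τ c) i ⊔ V (τ c) (i + 1)
  have finrank_W_le (τ : Fin M → Q) (i : ℕ) :
      (finrank ℝ (W τ i) : ℝ) ≤ M * (5 * D) * 4 ^ i := by
    simpa [mul_assoc] using finrank_iSup_le_card_mul fun c => finrank_sup_le (τ c) i
  refine (measure_mono fun ξ hξ => ?_).trans
    (stdGaussian_exists_not_isChainBounded_le finrank_W_le ht)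
  by_contra hgood
  refine hξ ?_
  simp only [Set.mem_ofPred_eq, not_exists, not_not, Fintype.card_fun, Fintype.card_fin,
    Nat.cast_pow, Real.log_pow] at hgood ⊢
  intro J hJ g s hg
  obtain ⟨τ, hτ⟩ := exists_fin_map_subset_range hJ
  refine (hgood τ).inner_sum_le (Real.sqrt_nonneg _) (fun q hq i => ?_) hg
  obtain ⟨c, rfl⟩ := hτ hq
  exact le_iSup (fun c => V (τ c) i ⊔ V (τ c) (i + 1)) c

end Chaining

section AdditiveModel

variable {n p m : ℕ}

lemma normN_eq_norm_div_sqrt (v : Fin n → ℝ) : normN v = ‖WithLp.toLp 2 v‖ / √n := by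
  rw [normN, normSqN, EuclideanSpace.norm_eq, one_div_mul_eq_div, Real.sqrt_div' _ n.cast_nonneg]
  simp only [Real.norm_eq_abs, sq_abs]

lemma innerN_eq_inner_div (u v : Fin n → ℝ) :
    innerN u v = inner ℝ (WithLp.toLp 2 u) (WithLp.toLp 2 v) / n := by
  rw [innerN, one_div_mul_eq_div]
  simp only [PiLp.inner_apply, RCLike.inner_apply, conj_trivial, mul_comm]

lemma Omega2M_nonneg (m : ℕ) (g : ℝ → ℝ → ℝ) : 0 ≤ Omega2M m g :=
  Finset.sum_nonneg fun _ _ => integral_nonneg fun _ => sq_nonneg _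

lemma Omega2M_const_right (m : ℕ) (h : ℝ → ℝ) : Omega2M m (fun u _ => h u) = Omega1M m h := by
  rw [Omega2M, Finset.sum_eq_single_of_mem m (by simp)]
  · have pd_eq (q : ℝ × ℝ) : pd m (m - m) (fun u _ => h u) q.1 q.2 = iteratedDeriv m h q.1 := by
      simp [pd]
    have fubini := setIntegral_prod_mul (μ := volume) (ν := volume)
      (fun u : ℝ => iteratedDeriv m h u ^ 2) (fun _ : ℝ => (1 : ℝ)) (Set.Icc 0 1) (Set.Icc 0 1)
    simp only [mul_one, ← Measure.volume_eq_prod] at fubini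
    simp only [pd_eq, fubini, Omega1M, intervalIntegral.integral_of_le zero_le_one,
      integral_Icc_eq_integral_Ioc]
    simp
  · intro a ha hne
    have : m - a ≠ 0 := by have := Finset.mem_range.mp ha; omega
    simp [pd, iteratedDeriv_const, this]

lemma Omega2M_zero (m : ℕ) : Omega2M m 0 = 0 :=
  (Omega2M_const_right m 0).trans (by simp [Omega1M])

lemma sum_diag_add_sum_lt (A : Fin p → ℝ) (B : Fin p → Fin p → ℝ) :
    (∑ j, A j) + ∑ j, ∑ k, (if j < k then B j k else 0) =
      ∑ q : Fin p × Fin p, if q.1 = q.2 then A q.1 else if q.1 < q.2 then B q.1 q.2 else 0 := by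
  rw [Fintype.sum_prod_type, ← Finset.sum_add_distrib]
  refine Finset.sum_congr rfl fun j _ => ?_
  have split (k : Fin p) : (if j = k then A j else if j < k then B j k else 0) =
      (if j = k then A j else 0) + if j < k then B j k else 0 := by
    rcases eq_or_ne j k with rfl | h
    · simp
    · simp [h]
  simp only [split, Finset.sum_add_distrib, Finset.sum_ite_eq, Finset.mem_univ, if_true]

namespace AddRepM

/-- The component `f_{j,k}` of an additive representation, as a function of two variables. On the
diagonal the main effect is made constant in its second variable, and below the diagonal, where
the model has no component, the value is `0`. -/
def component (R : AddRepM p m) (q : Fin p × Fin p) : ℝ → ℝ → ℝ :=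
  if q.1 = q.2 then fun u _ => R.main q.1 u else if q.1 < q.2 then R.inter q.1 q.2 else 0

variable (R : AddRepM p m)

lemma contDiff_component (q : Fin p × Fin p) :
    ContDiff ℝ m fun y : ℝ × ℝ => R.component q y.1 y.2 := by
  unfold component
  split_ifs
  · exact (R.smooth_main q.1).comp contDiff_fst
  · exact R.smooth_inter q.1 q.2
  · exact contDiff_const

lemma toFun_eq_sum_component (x : Fin p → ℝ) :
    R.toFun x = ∑ q : Fin p × Fin p, R.component q (x q.1) (x q.2) := by
  rw [toFun, sum_diag_add_sum_lt (fun j => R.main j (x j)) fun j k => R.inter j k (x j) (x k)]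
  refine Finset.sum_congr rfl fun q _ => ?_
  unfold component
  split_ifs <;> rfl

lemma omegaTildeGrM_eq_sum_component :
    OmegaTildeGrM R = ∑ q : Fin p × Fin p, √(Omega2M m (R.component q)) := by
  rw [OmegaTildeGrM, sum_diag_add_sum_lt (fun j => √(Omega1M m (R.main j)))
    fun j k => √(Omega2M m (R.inter j k))]
  refine Finset.sum_congr rfl fun q _ => ?_
  unfold component
  split_ifs
  · rw [Omega2M_const_right]
  · rfl
  · rw [Omega2M_zero, Real.sqrt_zero]

variable {R} {J : Finset (Fin p × Fin p)}

lemma component_eq_zero (hJ : SuppIn R J) {q : Fin p × Fin p} (hq : q ∉ J) :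
    R.component q = 0 := by
  unfold component
  split_ifs with heq hlt
  · have : R.main q.1 = 0 := by
      by_contra h
      exact hq ((Prod.ext rfl heq.symm : q = (q.1, q.1)) ▸ hJ.1 q.1 h)
    rw [this]
    rfl
  · by_contra h
    exact hq (hJ.2 _ _ h).2
  · rfl

lemma toLp_evalVecM (hJ : SuppIn R J) (x : Fin n → Fin p → ℝ) :
    WithLp.toLp 2 (evalVecM x R) =
      ∑ q ∈ J, WithLp.toLp 2 fun i => R.component q (x i q.1) (x i q.2) := by
  rw [← WithLp.toLp_sum]
  congr 1
  ext i
  rw [evalVecM, toFun_eq_sum_component, Finset.sum_apply]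
  refine (Finset.sum_subset (Finset.subset_univ J) fun q _ hq => ?_).symm
  rw [component_eq_zero hJ hq]
  rfl

end AddRepM

lemma exists_scale_isApproximable {ι : Type*} [Fintype ι] [Nonempty ι] (hm : 2 ≤ m)
    {z : ι → ℝ × ℝ} (hz : ∀ i, z i ∈ Set.Icc 0 1 ×ˢ Set.Icc 0 1) (L : ℕ) :
    ∃ V : ℕ → Submodule ℝ (EuclideanSpace ℝ ι),
      (∀ i, (Module.finrank ℝ (V i) : ℝ) ≤ 5 * m ^ 2 * 4 ^ L * 4 ^ i) ∧
      ∀ g : ℝ → ℝ → ℝ, ContDiff ℝ m (fun q : ℝ × ℝ => g q.1 q.2) →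
        IsApproximable V (√(Fintype.card ι) * (2 ^ m / 2 ^ (L * m) * √(Omega2M m g)))
          (WithLp.toLp 2 fun i => g (z i).1 (z i).2) := by
  choose V hV_finrank hV_approx using exists_submodule_norm_sq_sub_le hm hz
  refine ⟨fun i => V (L + i), fun i => (hV_finrank _).trans_eq (by ring), fun g hg i => ?_⟩
  obtain ⟨v, hv, hv_norm⟩ := hV_approx (L + i) g hg
  refine ⟨v, hv, le_of_sq_le_sq ?_ (by positivity)⟩
  have rate_le : ((4 : ℝ) ^ (i * m))⁻¹ ≤ ((4 ^ i) ^ 2)⁻¹ := by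
    rw [← pow_mul]
    gcongr
    norm_num
  have four_pow (k : ℕ) : (4 : ℝ) ^ k = (2 ^ k) ^ 2 := by
    rw [← pow_mul, mul_comm, pow_mul]; norm_num
  calc _ ≤ Fintype.card ι * 4 ^ m / 4 ^ ((L + i) * m) * Omega2M m g := hv_norm
    _ = Fintype.card ι * 4 ^ m / 4 ^ (L * m) * (4 ^ (i * m))⁻¹ * Omega2M m g := by
        rw [add_mul, pow_add]; ring
    _ ≤ Fintype.card ι * 4 ^ m / 4 ^ (L * m) * ((4 ^ i) ^ 2)⁻¹ * Omega2M m g := by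
        gcongr; exact Omega2M_nonneg m g
    _ = (√(Fintype.card ι) * (2 ^ m / 2 ^ (L * m) * √(Omega2M m g)) * (1 / 4) ^ i) ^ 2 := by
        rw [four_pow m, four_pow (L * m)]
        simp only [mul_pow, div_pow, one_pow, Nat.cast_nonneg, Real.sq_sqrt, Omega2M_nonneg]
        ring

lemma OmegaTildeGrM_nonneg (R : AddRepM p m) : 0 ≤ OmegaTildeGrM R := by
  rw [R.omegaTildeGrM_eq_sum_component]
  exact Finset.sum_nonneg fun _ _ => Real.sqrt_nonneg _

lemma gaussMeasure_not_innerN_evalVecM_le [NeZero n] [NeZero p] (hm : 2 ≤ m)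
    {x : Fin n → Fin p → ℝ} (hx : ∀ i j, x i j ∈ Set.Icc 0 1) {σ : ℝ} (hσ : σ ≠ 0) (L M : ℕ)
    {t : ℝ} (ht : 0 ≤ t) :
    gaussMeasure n σ {ε | ¬ ∀ R : AddRepM p m,
        (∃ J : Finset (Fin p × Fin p), J.card ≤ M ∧ SuppIn R J) →
        innerN (fun i => ε i / σ) (evalVecM x R) ≤
          √(4 * (2 * M * Real.log p + t + Real.log 2 + 25 * M * m ^ 2 * 4 ^ L) / n) *
            (normN (evalVecM x R) + 5 * (2 ^ m / 2 ^ (L * m) * OmegaTildeGrM R))} ≤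
      ENNReal.ofReal (Real.exp (-t)) := by
  have sqrt_n_pos : 0 < √(n : ℝ) := Real.sqrt_pos.mpr (by exact_mod_cast NeZero.pos n)
  choose V hV_finrank hV_approx using fun q : Fin p × Fin p =>
    exists_scale_isApproximable hm (z := fun i => (x i q.1, x i q.2))
      (fun i => ⟨hx i q.1, hx i q.2⟩) L
  have chaining := stdGaussian_not_inner_sum_le hV_finrank ht M
  rw [← gaussMeasure_map_div n hσ] at chaining
  refine (measure_mono fun ε hε => ?_).trans
    ((Measure.le_map_apply (Measurable.aemeasurable (by fun_prop)) _).trans chaining)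
  by_contra hgood
  refine hε fun R ⟨J, hJM, hJ⟩ => ?_
  have bound := not_not.mp hgood J hJM _ _ fun q _ => hV_approx q _ (R.contDiff_component q)
  have log_card : Real.log (Fintype.card (Fin p × Fin p)) = 2 * Real.log p := by
    rw [Fintype.card_prod, Fintype.card_fin, ← sq, Nat.cast_pow, Real.log_pow, Nat.cast_ofNat]
  have penalty_le : ∑ q ∈ J, √(Omega2M m (R.component q)) ≤ OmegaTildeGrM R := by
    rw [R.omegaTildeGrM_eq_sum_component]
    exact Finset.sum_le_univ_sum_of_nonneg fun _ => Real.sqrt_nonneg _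
  rw [← AddRepM.toLp_evalVecM hJ, log_card, Fintype.card_fin, ← Finset.mul_sum,
    ← Finset.mul_sum] at bound
  rw [innerN_eq_inner_div, normN_eq_norm_div_sqrt, Real.sqrt_div' _ n.cast_nonneg]
  calc _ ≤ _ / (n : ℝ) := div_le_div_of_nonneg_right bound n.cast_nonneg
    _ = √(4 * (2 * M * Real.log p + t + Real.log 2 + 25 * M * m ^ 2 * 4 ^ L)) / √n *
          (‖WithLp.toLp 2 (evalVecM x R)‖ / √n +
            5 * (2 ^ m / 2 ^ (L * m) * ∑ q ∈ J, √(Omega2M m (R.component q)))) := by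
        rw [show M * (5 * (5 * (m : ℝ) ^ 2 * 4 ^ L)) = 25 * M * m ^ 2 * 4 ^ L by ring]
        nth_rw 2 [← Real.mul_self_sqrt (n.cast_nonneg (α := ℝ))]
        field_simp
    _ ≤ _ := by gcongr

lemma rnM_sq (m n : ℕ) : rnM m n ^ 2 = (((n : ℝ) ^ ((m + 1 : ℕ) : ℝ)⁻¹) ^ m)⁻¹ := by
  rw [rnM, ← Real.rpow_natCast, ← Real.rpow_natCast, ← Real.rpow_mul n.cast_nonneg,
    ← Real.rpow_mul n.cast_nonneg, ← Real.rpow_neg n.cast_nonneg]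
  congr 1
  push_cast
  field_simp

lemma exists_level (m : ℕ) (hn : n ≠ 0) :
    ∃ L : ℕ, (4 : ℝ) ^ L / n ≤ rnM m n ^ 2 ∧ (2 : ℝ) ^ m / 2 ^ (L * m) ≤ 4 ^ m * rnM m n := by
  set y : ℝ := (n : ℝ) ^ ((m + 1 : ℕ) : ℝ)⁻¹ with hy
  have one_le_y : 1 ≤ y :=
    Real.one_le_rpow (by exact_mod_cast Nat.one_le_iff_ne_zero.mpr hn) (by positivity)
  have y_pow : y ^ (m + 1) = n := Real.rpow_inv_natCast_pow n.cast_nonneg m.succ_ne_zero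
  obtain ⟨L, four_pow_le, lt_four_pow⟩ := exists_nat_pow_near one_le_y (by norm_num : (1 : ℝ) < 4)
  refine ⟨L, ?_, le_of_sq_le_sq ?_ (mul_nonneg (by positivity) (Real.rpow_nonneg n.cast_nonneg _))⟩
  · calc (4 : ℝ) ^ L / n ≤ y / y ^ (m + 1) := by rw [y_pow]; gcongr
      _ = rnM m n ^ 2 := by rw [rnM_sq, ← hy, pow_succ]; field_simp
  · calc ((2 : ℝ) ^ m / 2 ^ (L * m)) ^ 2 = (4 ^ m) ^ 2 * ((4 ^ (L + 1)) ^ m)⁻¹ := by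
          rw [← pow_mul (4 : ℝ) (L + 1), add_mul, one_mul, pow_add]
          simp only [show (4 : ℝ) = 2 ^ 2 by norm_num, ← pow_mul, div_pow]
          field_simp
          ring
      _ ≤ (4 ^ m) ^ 2 * (y ^ m)⁻¹ := by gcongr
      _ = (4 ^ m * rnM m n) ^ 2 := by rw [mul_pow, rnM_sq]

lemma logep_eq (hp : p ≠ 0) : logep p = 1 + Real.log p := by
  rw [logep, Real.log_mul (Real.exp_ne_zero _) (by exact_mod_cast hp), Real.log_exp]

lemma sqrt_noise_level_le (M m : ℕ) {L : ℕ} (hp : p ≠ 0) {t : ℝ} (ht : 0 ≤ t)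
    (hL : (4 : ℝ) ^ L / n ≤ rnM m n ^ 2) :
    √(4 * (2 * M * Real.log p + t + Real.log 2 + 25 * M * m ^ 2 * 4 ^ L) / n) ≤
      2 * √(25 * M * m ^ 2 + 2 * M + 1) * (rnM m n + √(logep p / n) + √(t / n)) := by
  have logep_nonneg : 0 ≤ logep p := by rw [logep_eq hp]; positivity
  have rn_nonneg : 0 ≤ rnM m n := Real.rpow_nonneg n.cast_nonneg _
  have log_two_le : Real.log 2 ≤ 4 ^ L :=
    (Real.log_two_lt_d9.le.trans (by norm_num)).trans (one_le_pow₀ (by norm_num))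
  have dim_nonneg : 0 ≤ 25 * (M : ℝ) * m ^ 2 := by positivity
  set κ : ℝ := 25 * M * m ^ 2 + 2 * M + 1
  rw [Real.sqrt_le_left (by positivity), mul_pow, mul_pow, Real.sq_sqrt (by positivity)]
  calc 4 * (2 * M * Real.log p + t + Real.log 2 + 25 * M * m ^ 2 * 4 ^ L) / n
      ≤ 4 * (2 * M * logep p + t + 4 ^ L + 25 * M * m ^ 2 * 4 ^ L) / n := by
        gcongr
        rw [logep_eq hp]
        linarith
    _ = 4 * ((25 * M * m ^ 2 + 1) * (4 ^ L / n) + 2 * M * (logep p / n) + t / n) := by ring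
    _ ≤ 4 * ((25 * M * m ^ 2 + 1) * rnM m n ^ 2 + 2 * M * √(logep p / n) ^ 2 + √(t / n) ^ 2) := by
        rw [Real.sq_sqrt (by positivity), Real.sq_sqrt (by positivity)]
        gcongr
    _ ≤ 4 * (κ * rnM m n ^ 2 + κ * √(logep p / n) ^ 2 + κ * √(t / n) ^ 2) := by
        gcongr
        · linarith
        · linarith
        · exact le_mul_of_one_le_left (sq_nonneg _) (by linarith)
    _ = 2 ^ 2 * κ * (rnM m n ^ 2 + √(logep p / n) ^ 2 + √(t / n) ^ 2) := by ring
    _ ≤ 2 ^ 2 * κ * (rnM m n + √(logep p / n) + √(t / n)) ^ 2 := by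
        gcongr
        nlinarith [mul_nonneg rn_nonneg (Real.sqrt_nonneg (logep p / n)),
          mul_nonneg rn_nonneg (Real.sqrt_nonneg (t / n)),
          mul_nonneg (Real.sqrt_nonneg (logep p / n)) (Real.sqrt_nonneg (t / n))]

lemma sqrt_noise_level_mul_le (M : ℕ) {L : ℕ} (hp : p ≠ 0) {t : ℝ} (ht : 0 ≤ t)
    (hL : (4 : ℝ) ^ L / n ≤ rnM m n ^ 2) (hbias : (2 : ℝ) ^ m / 2 ^ (L * m) ≤ 4 ^ m * rnM m n)
    {N O : ℝ} (hN : 0 ≤ N) (hO : 0 ≤ O) :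
    √(4 * (2 * M * Real.log p + t + Real.log 2 + 25 * M * m ^ 2 * 4 ^ L) / n) *
        (N + 5 * (2 ^ m / 2 ^ (L * m) * O)) ≤
      2 * √(25 * M * m ^ 2 + 2 * M + 1) * (1 + 5 * 4 ^ m) *
        ((rnM m n + √(logep p / n) + √(t / n)) * N +
          (rnM m n ^ 2 + rnM m n * √(logep p / n) + rnM m n * √(t / n)) * O) := by
  have rn_nonneg : 0 ≤ rnM m n := Real.rpow_nonneg n.cast_nonneg _
  calc _ ≤ 2 * √(25 * M * m ^ 2 + 2 * M + 1) * (rnM m n + √(logep p / n) + √(t / n)) *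
          (N + 5 * (4 ^ m * rnM m n * O)) := by
        gcongr
        exact sqrt_noise_level_le M m hp ht hL
    _ ≤ 2 * √(25 * M * m ^ 2 + 2 * M + 1) * (rnM m n + √(logep p / n) + √(t / n)) *
          ((1 + 5 * 4 ^ m) * (N + rnM m n * O)) := by
        gcongr
        linarith [mul_nonneg (pow_nonneg zero_le_four m) hN, mul_nonneg rn_nonneg hO]
    _ = _ := by ring

lemma ofReal_one_sub_le_of_compl_le {Ω : Type*} [MeasurableSpace Ω] {μ : Measure Ω}
    [IsProbabilityMeasure μ] {s : Set Ω} {e : ℝ} (he : 0 ≤ e) (hs : μ sᶜ ≤ ENNReal.ofReal e) :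
    ENNReal.ofReal (1 - e) ≤ μ s := by
  rw [ENNReal.ofReal_sub _ he, ENNReal.ofReal_one, tsub_le_iff_right]
  calc 1 = μ (s ∪ sᶜ) := by rw [Set.union_compl_self, measure_univ]
    _ ≤ μ s + μ sᶜ := measure_union_le _ _
    _ ≤ μ s + ENNReal.ofReal e := by gcongr

end AdditiveModel

end Census

open Census in
/-- Lemma 3, uniform maximal inequality over `F_M`.  There is `C > 0`
depending only on `m` and `K` such that for every `ε' ∈ (0,1)`, with probability at
least `1 - ε'` over the i.i.d. `N(0,σ²)` noise, simultaneously for all `f ∈ F_M`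
(the union of the `F(J)` over `|J| ≤ M = K(K+1)/2`):
`(ε/σ, f)ₙ ≤ C[(rₙ + √(log(ep)/n) + √(log(1/ε')/n))‖f‖ₙ
  + (rₙ² + rₙ√(log(ep)/n) + rₙ√(log(1/ε')/n))Ω̃_gr(f)]`. -/
theorem statement7 (m K : ℕ) (hm : 2 ≤ m) (hK : 1 ≤ K) :
    ∃ C : ℝ, 0 < C ∧
      ∀ (n p : ℕ), 1 ≤ n → 1 ≤ p →
      ∀ (x : Fin n → Fin p → ℝ), (∀ i j, x i j ∈ Set.Icc (0:ℝ) 1) →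
      ∀ (σ : ℝ), 0 < σ →
      ∀ (ε' : ℝ), 0 < ε' → ε' < 1 →
        ENNReal.ofReal (1 - ε') ≤
          gaussMeasure n σ
            {ε : Fin n → ℝ |
              ∀ R : AddRepM p m,
                (∃ J : Finset (Fin p × Fin p), (∀ q ∈ J, q.1 ≤ q.2) ∧
                  J.card ≤ K * (K + 1) / 2 ∧ SuppIn R J) →
                innerN (fun i => ε i / σ) (evalVecM x R) ≤
                  C * ((rnM m n + Real.sqrt (logep p / n)
                        + Real.sqrt (Real.log (1 / ε') / n)) * normN (evalVecM x R)
                    + (rnM m n ^ 2 + rnM m n * Real.sqrt (logep p / n)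
                        + rnM m n * Real.sqrt (Real.log (1 / ε') / n))
                      * OmegaTildeGrM R)} := by
  set M : ℕ := K * (K + 1) / 2
  refine ⟨2 * √(25 * M * m ^ 2 + 2 * M + 1) * (1 + 5 * 4 ^ m), by positivity, ?_⟩
  intro n p hn hp x hx σ hσ ε' hε' hε'1
  have : NeZero n := ⟨by omega⟩
  have : NeZero p := ⟨by omega⟩
  have log_nonneg : 0 ≤ Real.log (1 / ε') := Real.log_nonneg (one_le_one_div hε' hε'1.le)
  obtain ⟨L, dim_le, bias_le⟩ := exists_level m (NeZero.ne n)
  have bad_le := gaussMeasure_not_innerN_evalVecM_le hm hx hσ.ne' L M log_nonneg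
  rw [Real.exp_neg, Real.exp_log (one_div_pos.mpr hε'), inv_div, div_one] at bad_le
  refine (ofReal_one_sub_le_of_compl_le hε'.le bad_le).trans (measure_mono ?_)
  rintro ε hε R ⟨J, -, hJM, hJ⟩
  exact (hε R ⟨J, hJM, hJ⟩).trans (sqrt_noise_level_mul_le M (NeZero.ne p) log_nonneg dim_le
    bias_le (Real.sqrt_nonneg _) (OmegaTildeGrM_nonneg R))
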